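/- arXiv:math/0401243 — 4 statements merged into one kernel-verified Lean document; each statement's English description precedes it below -/
import Mathlib

section
/- Let n ≥ 1 be an integer, t > 0 and λ a nonzero real number. For all a, b ∈ ℝ^n, ∫_{ℂ^{2n}} p_{2t}^λ(z+a, w+b) · exp((iλ/2)(a·w - b·z)) · conj(p_{2t}^λ(z,w)) · W_t^λ(z,w) dz dw = p_{2t}^λ(a,b). -/
open MeasureTheory Complex Filter Topology

noncomputable section

/-- Real hyperbolic cotangent. -/
def cothR (x : ℝ) : ℝ := Real.cosh x / Real.sinh x

/-- Bilinear dot product on `ℂ^n`: `z · w = ∑ j, z j * w j`. -/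
def dotC {n : ℕ} (z w : Fin n → ℂ) : ℂ := ∑ j, z j * w j

/-- Embedding `ℝ^n → ℂ^n`. -/
def embC {n : ℕ} (x : Fin n → ℝ) : Fin n → ℂ := fun j => (x j : ℂ)

/-- The twisted heat kernel `p_t^λ` on `ℂ^{2n}`. -/
def pC (n : ℕ) (t lam : ℝ) (z w : Fin n → ℂ) : ℂ :=
  (((4 * Real.pi) ^ n)⁻¹ : ℝ) * (((lam / Real.sinh (t * lam)) ^ n : ℝ) : ℂ) *
    Complex.exp (((-(lam / 4) * cothR (t * lam) : ℝ) : ℂ) * (dotC z z + dotC w w))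

/-- The twisted heat kernel on `ℝ^{2n}` (real-valued version). -/
def pR (n : ℕ) (t lam : ℝ) (x u : Fin n → ℝ) : ℝ :=
  ((4 * Real.pi) ^ n)⁻¹ * (lam / Real.sinh (t * lam)) ^ n *
    Real.exp (-(lam / 4) * cothR (t * lam) * ((∑ j, (x j) ^ 2) + ∑ j, (u j) ^ 2))

/-- The weight function `W_t^λ(x+iy, u+iv) = 4^n exp(λ(u·y - v·x)) p_{2t}^λ(2y, 2v)`. -/
def Wt (n : ℕ) (t lam : ℝ) (z w : Fin n → ℂ) : ℝ :=
  4 ^ n * Real.exp (lam * ((∑ j, (w j).re * (z j).im) - ∑ j, (w j).im * (z j).re)) *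
    pR n (2 * t) lam (fun j => 2 * (z j).im) (fun j => 2 * (w j).im)

/-! Dividing `p(z + a, w + b)` by `p(z, w)` leaves a constant multiple of `p(a, b)` times the
exponential of a holomorphic linear form in `(z, w)`, while `|p|² W` is a constant times `exp (-Q)`
for a Hermitian form `Q`: the growth of `|p|²` in the imaginary directions is compensated exactly
by `W`. Completing the square in `Q` shifts `w` by a complex multiple of `z`, so linear forms stay
holomorphic, and against `exp (-c |z|²)` the exponential of a holomorphic linear form integrates to
its value at the origin times the total mass. Hence the integral is `p(a, b)` times a constant, and
`coth² - 1 = sinh⁻²` makes that constant equal to `1`. -/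

section Hyperbolic

lemma cothR_sq_sub_one {x : ℝ} (hx : x ≠ 0) : cothR x ^ 2 - 1 = (Real.sinh x)⁻¹ ^ 2 := by
  have hsinh : Real.sinh x ≠ 0 := by positivity
  rw [cothR]
  field_simp
  linear_combination Real.cosh_sq x

lemma mul_cothR_mul_pos {t lam : ℝ} (ht : 0 < t) (hlam : lam ≠ 0) :
    0 < lam * cothR (t * lam) := by
  rw [cothR, ← mul_div_assoc, mul_comm, mul_div_assoc]
  refine mul_pos (Real.cosh_pos _) ?_
  rcases hlam.lt_or_gt with hneg | hpos
  · exact div_pos_of_neg_of_neg hneg (Real.sinh_neg_iff.2 (mul_neg_of_pos_of_neg ht hneg))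
  · positivity

lemma half_mul_cothR_sq_sub_sq_norm {x : ℝ} (hx : x ≠ 0) (lam : ℝ) :
    lam / 2 * cothR x * (lam / 2 * cothR x) - ‖I * lam / 2‖ ^ 2
      = (lam / Real.sinh x / 2) ^ 2 := by
  have hnorm : ‖I * lam / 2‖ ^ 2 = (lam / 2) ^ 2 := by simp [div_pow]
  rw [hnorm]
  linear_combination (lam / 2) ^ 2 * cothR_sq_sub_one hx

end Hyperbolic

section Shear

variable {E F G : Type*} [MeasurableSpace E] [AddGroup F] [MeasurableSpace F] [MeasurableAdd₂ F]
  [MeasurableSub₂ F] [NormedAddCommGroup G] [NormedSpace ℝ G]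

lemma integral_comp_prod_shear {μ : Measure E} {ν : Measure F} [SFinite μ] [SFinite ν]
    [ν.IsAddRightInvariant] {T : E → F} (hT : Measurable T) (f : E × F → G) :
    ∫ p, f (p.1, p.2 + T p.1) ∂μ.prod ν = ∫ p, f p ∂μ.prod ν := by
  let shear : E × F ≃ᵐ E × F :=
    { toFun := fun p => (p.1, p.2 + T p.1)
      invFun := fun p => (p.1, p.2 - T p.1)
      left_inv := fun p => by simp
      right_inv := fun p => by simp
      measurable_toFun := by dsimp; fun_prop
      measurable_invFun := by dsimp; fun_prop }
  have hshear : MeasurePreserving shear (μ.prod ν) (μ.prod ν) :=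
    (MeasurePreserving.id μ).skew_product (g := fun x y => y + T x)
      (measurable_snd.add (hT.comp measurable_fst))
      (.of_forall fun x => map_add_right_eq_self ν (T x))
  exact hshear.integral_comp' f

end Shear

section Gaussian

open scoped ComplexConjugate

variable {ι : Type*} [Fintype ι]

lemma integral_cexp_neg_mul_sq_norm_add_mul {b : ℂ} (hb : 0 < b.re) (c : ℂ) :
    ∫ z : ℂ, cexp (-b * ‖z‖ ^ 2 + c * z) = Real.pi / b := by
  rw [← Complex.volume_preserving_equiv_pi.symm.integral_comp']
  calc ∫ v : Fin 2 → ℝ, cexp (-b * ‖measurableEquivPi.symm v‖ ^ 2 + c * measurableEquivPi.symm v)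
    _ = ∫ v : Fin 2 → ℝ, cexp (-b * ∑ i, (v i : ℂ) ^ 2 + ∑ i, ![c, c * I] i * v i) := by
      refine integral_congr_ae (.of_forall fun v => ?_)
      have hnorm : (‖(v 0 + v 1 * I : ℂ)‖ : ℂ) ^ 2 = (v 0 : ℂ) ^ 2 + (v 1 : ℂ) ^ 2 := by
        rw [← ofReal_pow, Complex.sq_norm, normSq_add_mul_I]
        push_cast
        rfl
      simp only [measurableEquivPi_symm_apply, Fin.sum_univ_two, hnorm, Matrix.cons_val_zero,
        Matrix.cons_val_one]
      ring_nf
    _ = Real.pi / b := by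
      rw [GaussianFourier.integral_cexp_neg_mul_sum_add hb]
      simp [Fin.sum_univ_two, mul_pow]

lemma integral_cexp_neg_mul_sum_sq_norm_add_dotProduct {b : ℂ} (hb : 0 < b.re) (c : ι → ℂ) :
    ∫ z : ι → ℂ, cexp (-b * ∑ j, (‖z j‖ : ℂ) ^ 2 + c ⬝ᵥ z)
      = (Real.pi / b) ^ Fintype.card ι := by
  simp only [dotProduct, Finset.mul_sum, ← Finset.sum_add_distrib, Complex.exp_sum]
  rw [integral_fintype_prod_volume_eq_prod (fun j z => cexp (-b * ‖z‖ ^ 2 + c j * z))]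
  simp only [integral_cexp_neg_mul_sq_norm_add_mul hb, Finset.prod_const, Finset.card_univ]

/-- The Hermitian form on `ℂ^ι × ℂ^ι` whose matrix is the `2 × 2` Hermitian matrix with diagonal
`A, B` and off-diagonal entry `κ`, acting by scalars on each `ℂ^ι`. It is the negated exponent of
the Gaussian `|p|² W`, where `A = B = (λ/2) coth (2tλ)` and `κ = iλ/2`. -/
def blockHermitianForm (A B : ℝ) (κ : ℂ) (z w : ι → ℂ) : ℝ :=
  ∑ j, (A * ‖z j‖ ^ 2 + B * ‖w j‖ ^ 2 + 2 * (κ * z j * conj (w j)).re)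

lemma blockHermitianForm_add_smul (A : ℝ) {B : ℝ} (hB : B ≠ 0) (κ : ℂ) (z w : ι → ℂ) :
    blockHermitianForm A B κ z (w + (-κ / B) • z)
      = (A - ‖κ‖ ^ 2 / B) * ∑ j, ‖z j‖ ^ 2 + B * ∑ j, ‖w j‖ ^ 2 := by
  simp only [blockHermitianForm, Finset.mul_sum, ← Finset.sum_add_distrib, Pi.add_apply,
    Pi.smul_apply, smul_eq_mul]
  refine Finset.sum_congr rfl fun j _ => ?_
  simp only [Complex.sq_norm, normSq_apply, add_re, add_im, mul_re, mul_im, div_ofReal_re,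
    div_ofReal_im, neg_re, neg_im, conj_re, conj_im]
  field_simp
  ring

theorem integral_cexp_neg_blockHermitianForm_add {A B : ℝ} {κ : ℂ} (hB : 0 < B)
    (hκ : ‖κ‖ ^ 2 < A * B) (α β : ι → ℂ) :
    ∫ q : (ι → ℂ) × (ι → ℂ),
      cexp (-(blockHermitianForm A B κ q.1 q.2 : ℂ) + (α ⬝ᵥ q.1 + β ⬝ᵥ q.2))
      = ((Real.pi ^ 2 / (A * B - ‖κ‖ ^ 2)) ^ Fintype.card ι : ℝ) := by
  set D : ℝ := A - ‖κ‖ ^ 2 / B with hD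
  have hDpos : 0 < D := by rw [hD, sub_pos, div_lt_iff₀ hB]; exact hκ
  have hdet : D * B = A * B - ‖κ‖ ^ 2 := by rw [hD]; field_simp
  have separate : ∀ q : (ι → ℂ) × (ι → ℂ),
      cexp (-(blockHermitianForm A B κ q.1 (q.2 + (-κ / B) • q.1) : ℂ)
          + (α ⬝ᵥ q.1 + β ⬝ᵥ (q.2 + (-κ / B) • q.1)))
        = cexp (-(D : ℂ) * ∑ j, (‖q.1 j‖ : ℂ) ^ 2 + (α + (-κ / B) • β) ⬝ᵥ q.1)
          * cexp (-(B : ℂ) * ∑ j, (‖q.2 j‖ : ℂ) ^ 2 + β ⬝ᵥ q.2) := by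
    rintro ⟨z, w⟩
    rw [blockHermitianForm_add_smul A hB.ne', ← hD, ← Complex.exp_add, add_dotProduct,
      smul_dotProduct, dotProduct_add, dotProduct_smul]
    push_cast
    ring_nf
  rw [Measure.volume_eq_prod, ← integral_comp_prod_shear (T := fun z => (-κ / (B : ℂ)) • z)
    (by fun_prop)]
  simp only [separate]
  rw [integral_prod_mul (μ := volume) (ν := volume)
      (fun z => cexp (-(D : ℂ) * ∑ j, (‖z j‖ : ℂ) ^ 2 + (α + (-κ / B) • β) ⬝ᵥ z))
      (fun w => cexp (-(B : ℂ) * ∑ j, (‖w j‖ : ℂ) ^ 2 + β ⬝ᵥ w)),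
    integral_cexp_neg_mul_sum_sq_norm_add_dotProduct (by simpa using hDpos),
    integral_cexp_neg_mul_sum_sq_norm_add_dotProduct (by simpa using hB),
    ← mul_pow, div_mul_div_comm, ← sq, ← hdet]
  push_cast
  rfl

end Gaussian

section HeatKernel

open scoped ComplexConjugate

variable {n : ℕ}

lemma dotC_eq_dotProduct (z w : Fin n → ℂ) : dotC z w = z ⬝ᵥ w := rfl

lemma re_dotC_self (z : Fin n → ℂ) : (dotC z z).re = ∑ j, ((z j).re ^ 2 - (z j).im ^ 2) := by
  simp [dotC, mul_re, sq]

lemma pC_add_add (t lam : ℝ) (a b z w : Fin n → ℂ) :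
    pC n t lam (z + a) (w + b) = pC n t lam a b *
      (cexp ((-(lam / 4) * cothR (t * lam) : ℝ) * (dotC z z + dotC w w))
        * cexp (-(lam / 2 * cothR (t * lam) : ℝ) * (dotC a z + dotC b w))) := by
  simp only [pC, dotC_eq_dotProduct, add_dotProduct, dotProduct_add, dotProduct_comm z a,
    dotProduct_comm w b]
  rw [mul_assoc _ (cexp _), ← Complex.exp_add, ← Complex.exp_add]
  push_cast
  ring_nf

lemma cexp_mul_conj_cexp (z : ℂ) : cexp z * conj (cexp z) = Real.exp (2 * z.re) := by
  rw [Complex.mul_conj', Complex.norm_exp, ← ofReal_pow, ← Real.exp_nat_mul]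
  norm_num

lemma neg_blockHermitianForm_I_mul_div_two (A lam : ℝ) (z w : Fin n → ℂ) :
    -blockHermitianForm A A (I * lam / 2) z w
      = -A * ((dotC z z).re + (dotC w w).re)
        + lam * ((∑ j, (w j).re * (z j).im) - ∑ j, (w j).im * (z j).re)
        + -(A / 2) * ((∑ j, (2 * (z j).im) ^ 2) + ∑ j, (2 * (w j).im) ^ 2) := by
  simp only [re_dotC_self, blockHermitianForm, ← Finset.sum_add_distrib,
    ← Finset.sum_sub_distrib, Finset.mul_sum, ← Finset.sum_neg_distrib]
  refine Finset.sum_congr rfl fun j _ => ?_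
  simp only [Complex.sq_norm, normSq_apply, mul_re, mul_im, div_ofNat_re, div_ofNat_im, I_re, I_im,
    ofReal_re, ofReal_im, conj_re, conj_im]
  ring

lemma cexp_mul_conj_pC_mul_Wt (t lam : ℝ) (z w : Fin n → ℂ) :
    cexp ((-(lam / 4) * cothR (2 * t * lam) : ℝ) * (dotC z z + dotC w w))
        * conj (pC n (2 * t) lam z w) * Wt n t lam z w
      = (((lam / Real.sinh (2 * t * lam) / (2 * Real.pi)) ^ 2) ^ n : ℝ)
        * cexp (-(blockHermitianForm (lam / 2 * cothR (2 * t * lam))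
            (lam / 2 * cothR (2 * t * lam)) (I * lam / 2) z w : ℂ)) := by
  set s : ℝ := lam / Real.sinh (2 * t * lam) with hs
  have amplitude : ((4 * Real.pi) ^ n)⁻¹ * s ^ n * (4 ^ n * (((4 * Real.pi) ^ n)⁻¹ * s ^ n))
      = ((s / (2 * Real.pi)) ^ 2) ^ n := by
    simp only [← inv_pow, ← mul_pow]
    ring_nf
  have modulus := cexp_mul_conj_cexp
    ((-(lam / 4) * cothR (2 * t * lam) : ℝ) * (dotC z z + dotC w w))
  rw [re_ofReal_mul, add_re] at modulus
  rw [pC, Wt, pR, ← hs, ← ofReal_neg, neg_blockHermitianForm_I_mul_div_two, ← amplitude,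
    ← ofReal_exp, Real.exp_add, Real.exp_add]
  simp only [map_mul, conj_ofReal]
  rw [mul_left_comm, modulus]
  push_cast
  ring_nf

lemma reproducing_integrand_eq (t lam : ℝ) (a b z w : Fin n → ℂ) :
    pC n (2 * t) lam (z + a) (w + b) * cexp (I * lam / 2 * (dotC a w - dotC b z)) *
        conj (pC n (2 * t) lam z w) * Wt n t lam z w
      = pC n (2 * t) lam a b *
        (((lam / Real.sinh (2 * t * lam) / (2 * Real.pi)) ^ 2) ^ n : ℝ) *
        cexp (-(blockHermitianForm (lam / 2 * cothR (2 * t * lam))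
            (lam / 2 * cothR (2 * t * lam)) (I * lam / 2) z w : ℂ)
          + ((-(lam / 2 * cothR (2 * t * lam) : ℂ) • a - (I * lam / 2) • b) ⬝ᵥ z
            + (-(lam / 2 * cothR (2 * t * lam) : ℂ) • b + (I * lam / 2) • a) ⬝ᵥ w)) := by
  set A : ℝ := lam / 2 * cothR (2 * t * lam)
  have linear : cexp (-(A : ℂ) * (dotC a z + dotC b w)) *
        cexp (I * lam / 2 * (dotC a w - dotC b z))
      = cexp ((-(lam / 2 * cothR (2 * t * lam) : ℂ) • a - (I * lam / 2) • b) ⬝ᵥ z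
          + (-(lam / 2 * cothR (2 * t * lam) : ℂ) • b + (I * lam / 2) • a) ⬝ᵥ w) := by
    simp only [← Complex.exp_add, dotC_eq_dotProduct, sub_dotProduct, add_dotProduct,
      smul_dotProduct, smul_eq_mul, A]
    push_cast
    ring_nf
  rw [pC_add_add, Complex.exp_add, ← linear]
  linear_combination pC n (2 * t) lam a b * cexp (-(A : ℂ) * (dotC a z + dotC b w)) *
    cexp (I * lam / 2 * (dotC a w - dotC b z)) * cexp_mul_conj_pC_mul_Wt t lam z w

end HeatKernel

theorem reproducing_identity_general
    (n : ℕ) (t lam : ℝ) (ht : 0 < t) (hlam : lam ≠ 0) (a b : Fin n → ℂ) :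
    ∫ q : (Fin n → ℂ) × (Fin n → ℂ),
      pC n (2 * t) lam (q.1 + a) (q.2 + b) *
        Complex.exp ((Complex.I * lam / 2) * (dotC a q.2 - dotC b q.1)) *
        (starRingEnd ℂ) (pC n (2 * t) lam q.1 q.2) * (Wt n t lam q.1 q.2 : ℂ)
      = pC n (2 * t) lam a b := by
  have hx : 2 * t * lam ≠ 0 := by positivity
  have hA : 0 < lam / 2 * cothR (2 * t * lam) := by
    linarith [mul_cothR_mul_pos (show 0 < 2 * t by positivity) hlam]
  have hdet := half_mul_cothR_sq_sub_sq_norm hx lam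
  have mass : ((lam / Real.sinh (2 * t * lam) / (2 * Real.pi)) ^ 2) ^ n *
      (Real.pi ^ 2 / (lam / Real.sinh (2 * t * lam) / 2) ^ 2) ^ n = 1 := by
    rw [← mul_pow]
    field_simp
    norm_num
  simp only [reproducing_integrand_eq]
  rw [integral_const_mul,
    integral_cexp_neg_blockHermitianForm_add hA (sub_pos.1 (hdet ▸ by positivity)),
    hdet, Fintype.card_fin, mul_assoc, ← ofReal_mul, mass, ofReal_one, mul_one]

/-- For `t > 0`, `λ ≠ 0` and `a, b ∈ ℝ^n`,
`∫_{ℂ^{2n}} p_{2t}^λ(z+a, w+b) exp((iλ/2)(a·w - b·z)) conj(p_{2t}^λ(z,w)) W_t^λ(z,w) dz dw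
  = p_{2t}^λ(a,b)`. -/
theorem reproducing_identity
    (n : ℕ) (hn : 1 ≤ n) (t lam : ℝ) (ht : 0 < t) (hlam : lam ≠ 0)
    (a b : Fin n → ℝ) :
    ∫ q : (Fin n → ℂ) × (Fin n → ℂ),
      pC n (2 * t) lam (q.1 + embC a) (q.2 + embC b) *
        Complex.exp ((Complex.I * lam / 2) * (dotC (embC a) q.2 - dotC (embC b) q.1)) *
        (starRingEnd ℂ) (pC n (2 * t) lam q.1 q.2) * (Wt n t lam q.1 q.2 : ℂ)
      = pC n (2 * t) lam (embC a) (embC b) :=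
  reproducing_identity_general n t lam ht hlam (embC a) (embC b)
end
end

section
/- Let n ≥ 1 be an integer, t > 0 and λ a nonzero real number. Every monomial (z,w) ↦ z^α w^β (α, β ∈ ℕ₀^n) belongs to the twisted Fock space ℱ_t^λ(ℂ^{2n}), and the linear span of these monomials is dense in ℱ_t^λ(ℂ^{2n}) with respect to the norm ‖G‖² = ∫_{ℂ^{2n}} |G(z,w)|² 𝒲_t^λ(z,w) dz dw. -/
open MeasureTheory Complex Filter Topology

noncomputable section

/-- The Fock-space weight
`𝒲_t^λ(z,w) = exp(λ·Im(z·w̄)) · exp(-(λ/2)·coth(2tλ)·(|z|²+|w|²))`. -/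
def WF (n : ℕ) (t lam : ℝ) (z w : Fin n → ℂ) : ℝ :=
  Real.exp (lam * ∑ j, (z j * (starRingEnd ℂ) (w j)).im) *
    Real.exp (-(lam / 2) * cothR (2 * t * lam) * ((∑ j, ‖z j‖ ^ 2) + ∑ j, ‖w j‖ ^ 2))

/-- Membership in the twisted Fock space `ℱ_t^λ(ℂ^{2n})`: holomorphic and square-integrable
against the weight `𝒲_t^λ`. -/
def FockMem (n : ℕ) (t lam : ℝ) (G : (Fin n → ℂ) × (Fin n → ℂ) → ℂ) : Prop :=
  Differentiable ℂ G ∧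
    Integrable (fun q : (Fin n → ℂ) × (Fin n → ℂ) => ‖G q‖ ^ 2 * WF n t lam q.1 q.2) volume

/-- The monomial `(z,w) ↦ z^α w^β`. -/
def monomial (n : ℕ) (α β : Fin n → ℕ) : (Fin n → ℂ) × (Fin n → ℂ) → ℂ :=
  fun q => (∏ j, q.1 j ^ α j) * ∏ j, q.2 j ^ β j

/-!
The weight is invariant under `q ↦ u • q` for `|u| = 1`. On each circle `u ↦ u • q` the Taylor
expansion of an entire `G` into homogeneous parts, `G (u • q) = ∑ k, G_k q * u ^ k`, is a Fourier
series, so averaging Parseval's identity over the circle action gives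
`‖G - ∑ k < N, G_k‖² = ∑ k ≥ N, ‖G_k‖²`, the tail of a convergent series. By Euler's identity
`k * G_k q = ∂_q G_k q` and induction on `k`, each `G_k` is a polynomial. Monomials have finite norm
because `|λ Im(z·w̄)| ≤ (|λ|/2)(|z|² + |w|²)` and `λ coth(2tλ) > |λ|`, so that the weight decays
like a Gaussian.
-/

section HolomorphicParameters

variable {V : Type*} [NormedAddCommGroup V] [NormedSpace ℂ V]

theorem norm_fderiv_le_of_forall_mem_ball_norm_le {f : V → ℂ} {c : V} {R C : ℝ} (hR : 0 < R)
    (hf : DifferentiableOn ℂ f (Metric.ball c R)) (hC : ∀ x ∈ Metric.ball c R, ‖f x‖ ≤ C) :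
    ‖fderiv ℂ f c‖ ≤ 2 * C / R := by
  refine Complex.norm_fderiv_le_div_of_mapsTo_ball hf (fun x hx => ?_) hR
  rw [mem_closedBall_iff_norm]
  linarith [norm_sub_le (f x) (f c), hC x hx, hC c (Metric.mem_ball_self hR)]

variable [FiniteDimensional ℂ V]

theorem differentiable_intervalIntegral_of_continuous {H : V → ℝ → ℂ}
    (hcont : Continuous (Function.uncurry H)) (hdiff : ∀ s, Differentiable ℂ fun q => H q s)
    (a b : ℝ) : Differentiable ℂ fun q => ∫ s in a..b, H q s := by
  have : ProperSpace V := FiniteDimensional.proper ℂ V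
  have : ProperSpace (V →L[ℂ] ℂ) := FiniteDimensional.proper ℂ _
  borelize V
  intro q₀
  obtain ⟨C, hC⟩ := ((isCompact_closedBall q₀ 2).prod (isCompact_uIcc (a := a) (b := b)))
    |>.exists_bound_of_continuousOn hcont.continuousOn
  have hcont_left (q : V) : Continuous (H q) := hcont.comp (Continuous.prodMk_right q)
  have hmeas : Measurable fun s => fderiv ℂ (fun q => H q s) q₀ :=
    (measurable_fderiv_with_param ℂ (f := fun s q => H q s) (hcont.comp continuous_swap)).comp
      measurable_prodMk_right
  have hbound (s : ℝ) (hs : s ∈ Set.uIoc a b) (q : V) (hq : q ∈ Metric.ball q₀ 1) :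
      ‖fderiv ℂ (fun q => H q s) q‖ ≤ 2 * C / 1 := by
    refine norm_fderiv_le_of_forall_mem_ball_norm_le one_pos (hdiff s).differentiableOn
      fun x hx => hC (x, s) ⟨?_, Set.uIoc_subset_uIcc hs⟩
    rw [Metric.mem_ball] at hq hx
    rw [Metric.mem_closedBall]
    linarith [dist_triangle x q q₀]
  exact (intervalIntegral.hasFDerivAt_integral_of_dominated_of_fderiv_le
    (F' := fun q s => fderiv ℂ (fun q => H q s) q) (Metric.ball_mem_nhds q₀ one_pos)
    (.of_forall fun q => (hcont_left q).aestronglyMeasurable)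
    ((hcont_left q₀).intervalIntegrable a b) hmeas.aestronglyMeasurable
    (.of_forall hbound) intervalIntegrable_const
    (.of_forall fun s _ q _ => (hdiff s q).hasFDerivAt)).differentiableAt

theorem differentiable_iteratedDeriv_right {H : V × ℂ → ℂ} (hH : Differentiable ℂ H)
    (k : ℕ) (c : ℂ) : Differentiable ℂ fun q => iteratedDeriv k (fun ζ => H (q, ζ)) c := by
  have cauchy (q : V) : iteratedDeriv k (fun ζ => H (q, ζ)) c = (2 * Real.pi * I / k.factorial)⁻¹ *
      ∮ ζ in C(c, 1), (1 / (ζ - c) ^ (k + 1)) • H (q, ζ) := by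
    have hH_right : Differentiable ℂ fun ζ => H (q, ζ) := by fun_prop
    have hne : (2 * Real.pi * I / k.factorial : ℂ) ≠ 0 :=
      div_ne_zero two_pi_I_ne_zero (mod_cast k.factorial_ne_zero)
    rw [hH_right.differentiableOn.circleIntegral_one_div_sub_center_pow_smul one_pos,
      smul_eq_mul, inv_mul_cancel_left₀ hne]
  simp only [cauchy]
  refine (differentiable_intervalIntegral_of_continuous ?_ (fun s => ?_) _ _).const_mul _
  · have hpow (p : V × ℝ) : (circleMap c 1 p.2 - c) ^ (k + 1) ≠ 0 :=
      pow_ne_zero _ (sub_ne_zero.2 (circleMap_ne_center one_ne_zero))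
    have := hH.continuous
    simp only [deriv_circleMap, smul_eq_mul]
    unfold Function.uncurry
    fun_prop (disch := exact hpow _)
  · fun_prop

theorem differentiable_fderiv_apply {g : V → ℂ} (hg : Differentiable ℂ g) (v : V) :
    Differentiable ℂ fun q => fderiv ℂ g q v := by
  have hline : Differentiable ℂ fun p : V × ℂ => g (p.1 + p.2 • v) := by fun_prop
  convert! differentiable_iteratedDeriv_right hline 1 0 using 2 with q
  rw [iteratedDeriv_one, ← (hg q).lineDeriv_eq_fderiv, lineDeriv]

end HolomorphicParameters

/-- `g` is homogeneous of degree `k` under scaling by all complex numbers, `0` included (so that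
degree `0` forces `g` to be constant). -/
def IsHomogeneousOfDegree {V : Type*} [AddCommGroup V] [Module ℂ V] (k : ℕ) (g : V → ℂ) : Prop :=
  ∀ (c : ℂ) (q : V), g (c • q) = c ^ k * g q

namespace IsHomogeneousOfDegree

variable {V : Type*} [NormedAddCommGroup V] [NormedSpace ℂ V] {k : ℕ} {g : V → ℂ}

theorem fderiv_apply_self (hhom : IsHomogeneousOfDegree k g) {q : V} (hg : DifferentiableAt ℂ g q) :
    fderiv ℂ g q q = k * g q := by
  have hray : HasDerivAt (fun c : ℂ => c • q) q 1 := by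
    simpa using (hasDerivAt_id (1 : ℂ)).smul_const q
  have hcomp : HasDerivAt (fun c : ℂ => g (c • q)) (fderiv ℂ g q q) 1 :=
    HasFDerivAt.comp_hasDerivAt (f := fun c : ℂ => c • q) 1 (by simpa using hg.hasFDerivAt) hray
  have hpow : HasDerivAt (fun c : ℂ => g (c • q)) (k * g q) 1 := by
    simpa [hhom _ q] using (hasDerivAt_pow k (1 : ℂ)).mul_const (g q)
  exact hcomp.unique hpow

theorem fderiv_apply [FiniteDimensional ℂ V] (hhom : IsHomogeneousOfDegree (k + 1) g)
    (hg : Differentiable ℂ g) (v : V) : IsHomogeneousOfDegree k fun q => fderiv ℂ g q v := by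
  intro c q
  have hcont : Continuous fun q => fderiv ℂ g q v := (differentiable_fderiv_apply hg v).continuous
  -- Differentiating `g (c • q) = c ^ (k + 1) * g q` gives the claim multiplied by `c`; the value at
  -- `c = 0` follows by continuity.
  refine congr_fun (Continuous.ext_on (f := fun c : ℂ => fderiv ℂ g (c • q) v)
    (g := fun c : ℂ => c ^ k * fderiv ℂ g q v) (dense_compl_singleton 0) (by fun_prop)
    (by fun_prop) fun c hc => ?_) c
  have hscale : c • fderiv ℂ g (c • q) v = c ^ (k + 1) • fderiv ℂ g q v := by
    rw [← _root_.smul_apply, ← fderiv_comp_smul, ← _root_.smul_apply,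
      ← fderiv_fun_const_smul (hg q)]
    congr 2
    exact funext fun q => hhom c q
  rw [smul_eq_mul, smul_eq_mul, pow_succ', mul_assoc] at hscale
  exact mul_left_cancel₀ hc hscale

theorem exists_mvPolynomial_eval {ι : Type*} [Finite ι] (b : Module.Basis ι ℂ V)
    (hhom : IsHomogeneousOfDegree k g) (hg : Differentiable ℂ g) :
    ∃ p : MvPolynomial ι ℂ, ∀ q, g q = MvPolynomial.eval (b.repr q) p := by
  have : FiniteDimensional ℂ V := b.finiteDimensional_of_finite
  cases nonempty_fintype ι
  induction k generalizing g with
  | zero => exact ⟨MvPolynomial.C (g 0), fun q => by simpa using (hhom 0 q).symm⟩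
  | succ k ih =>
    choose p hp using fun i =>
      ih (hhom.fderiv_apply hg (b i)) (differentiable_fderiv_apply hg (b i))
    refine ⟨MvPolynomial.C (k + 1 : ℂ)⁻¹ * ∑ i, MvPolynomial.X i * p i, fun q => ?_⟩
    have euler : (k + 1 : ℂ) * g q = ∑ i, b.repr q i * fderiv ℂ g q (b i) := by
      rw [← Nat.cast_succ, ← hhom.fderiv_apply_self (hg q)]
      simpa only [map_sum, map_smul, smul_eq_mul] using
        congrArg (fderiv ℂ g q) (b.sum_repr q).symm
    simp only [map_mul, map_sum, MvPolynomial.eval_C, MvPolynomial.eval_X, ← hp, ← euler]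
    rw [inv_mul_cancel_left₀ (by exact_mod_cast k.succ_ne_zero)]

end IsHomogeneousOfDegree

section Parseval

theorem hasSum_norm_sq_of_orthonormal {𝕜 E ι : Type*} [RCLike 𝕜] [NormedAddCommGroup E]
    [InnerProductSpace 𝕜 E] {v : ι → E} (hv : Orthonormal 𝕜 v) {c : ι → 𝕜} {x : E}
    (hx : HasSum (fun i => c i • v i) x) : HasSum (fun i => ‖c i‖ ^ 2) (‖x‖ ^ 2) := by
  have hfinset (s : Finset ι) : ‖∑ i ∈ s, c i • v i‖ ^ 2 = ∑ i ∈ s, ‖c i‖ ^ 2 := by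
    rw [← RCLike.ofReal_inj (K := 𝕜), RCLike.ofReal_pow, ← inner_self_eq_norm_sq_to_K (𝕜 := 𝕜),
      hv.inner_sum]
    simp [RCLike.conj_mul]
  simpa only [HasSum, hfinset] using hx.norm.pow 2

theorem lintegral_enorm_sq_eq_tsum_of_hasSum_fourier {T : ℝ} [Fact (0 < T)] {ι : Type*}
    {φ : ι → ℤ} (hφ : φ.Injective) {c : ι → ℂ} (hc : Summable fun i => ‖c i‖)
    {f : AddCircle T → ℂ} (hf : ∀ θ, HasSum (fun i => c i * fourier (φ i) θ) (f θ)) :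
    ∫⁻ θ, ‖f θ‖ₑ ^ 2 ∂AddCircle.haarAddCircle = ∑' i, ‖c i‖ₑ ^ 2 := by
  have hsummable : Summable fun i => c i • (fourier (φ i) : C(AddCircle T, ℂ)) :=
    .of_norm (by simpa only [norm_smul, fourier_norm, mul_one] using hc)
  obtain ⟨F, hF⟩ := hsummable
  have hFf : ⇑F = f := funext fun θ => (ContinuousMap.hasSum_apply hF θ).unique (hf θ)
  let L := ContinuousMap.toLp (E := ℂ) 2 (AddCircle.haarAddCircle (T := T)) ℂ
  have hsum : HasSum (fun i => c i • fourierLp 2 (φ i)) (L F) := by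
    simpa only [map_smul] using hF.mapL L
  have hparseval := hasSum_norm_sq_of_orthonormal (orthonormal_fourier.comp φ hφ) hsum
  have hnorm : ‖L F‖ₑ ^ 2 = ∫⁻ θ, ‖f θ‖ₑ ^ 2 ∂AddCircle.haarAddCircle := by
    rw [Lp.enorm_def, eLpNorm_congr_ae (ContinuousMap.coeFn_toLp _ F), hFf]
    simpa using eLpNorm_nnreal_pow_eq_lintegral (f := f) (μ := AddCircle.haarAddCircle)
      (p := 2) two_ne_zero
  rw [← hnorm]
  simp only [← ofReal_norm, ← ENNReal.ofReal_pow (norm_nonneg _)]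
  rw [← hparseval.tsum_eq,
    ENNReal.ofReal_tsum_of_nonneg (fun _ => by positivity) hparseval.summable]

end Parseval

/-- The degree `k` component of the Taylor expansion of `G` at the origin, read off from the
restriction of `G` to complex lines. -/
def homogeneousPart {V : Type*} [AddCommGroup V] [Module ℂ V] (G : V → ℂ) (k : ℕ) (q : V) : ℂ :=
  (k.factorial : ℂ)⁻¹ * iteratedDeriv k (fun ζ : ℂ => G (ζ • q)) 0

namespace homogeneousPart

variable {V : Type*} [NormedAddCommGroup V] [NormedSpace ℂ V] {G : V → ℂ}

theorem isHomogeneousOfDegree (hG : Differentiable ℂ G) (k : ℕ) :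
    IsHomogeneousOfDegree k (homogeneousPart G k) := by
  intro c q
  have hline : ContDiff ℂ k fun ζ : ℂ => G (ζ • q) :=
    Differentiable.contDiff (by fun_prop)
  have hscale : (fun ζ : ℂ => G (ζ • c • q)) = fun ζ => G ((c * ζ) • q) := by
    simp only [smul_smul, mul_comm c]
  rw [homogeneousPart, hscale, iteratedDeriv_comp_const_smul hline c, homogeneousPart]
  simp only [mul_zero, smul_eq_mul]
  ring

theorem differentiable [FiniteDimensional ℂ V] (hG : Differentiable ℂ G) (k : ℕ) :
    Differentiable ℂ (homogeneousPart G k) :=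
  (differentiable_iteratedDeriv_right (H := fun p : V × ℂ => G (p.2 • p.1)) (by fun_prop) k 0)
    |>.const_mul _

theorem hasSum_mul_pow (hG : Differentiable ℂ G) (q : V) (u : ℂ) :
    HasSum (fun k => homogeneousPart G k q * u ^ k) (G (u • q)) := by
  have hline : Differentiable ℂ fun ζ : ℂ => G (ζ • q) := by fun_prop
  refine (hasSum_taylorSeries_of_entire hline 0 u).congr_fun fun k => ?_
  rw [homogeneousPart, sub_zero, smul_eq_mul, smul_eq_mul]
  ring

theorem summable_norm (hG : Differentiable ℂ G) (q : V) :
    Summable fun k => ‖homogeneousPart G k q‖ := by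
  simpa using (hasSum_mul_pow hG q 1).summable.norm

theorem hasSum_tail (hG : Differentiable ℂ G) (N : ℕ) (q : V) (u : ℂ) :
    HasSum (fun k => homogeneousPart G (k + N) q * u ^ (k + N))
      (G (u • q) - ∑ k ∈ Finset.range N, homogeneousPart G k (u • q)) := by
  simpa only [isHomogeneousOfDegree hG _ u q, mul_comm] using
    (hasSum_nat_add_iff' N).2 (hasSum_mul_pow hG q u)

end homogeneousPart

section CircleInvariantMeasure

theorem lintegral_lintegral_smul_eq {Θ M X : Type*} [SMul M X] [MeasurableSpace Θ]
    [MeasurableSpace X] [MeasurableConstSMul M X] (ν : Measure Θ) [IsProbabilityMeasure ν]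
    (μ : Measure X) [SFinite μ] [SMulInvariantMeasure M X μ] {g : Θ → M}
    (hg : Measurable fun p : X × Θ => g p.2 • p.1) {F : X → ENNReal} (hF : Measurable F) :
    ∫⁻ x, ∫⁻ θ, F (g θ • x) ∂ν ∂μ = ∫⁻ x, F x ∂μ := by
  rw [lintegral_lintegral_swap (f := fun x θ => F (g θ • x)) (hF.comp hg).aemeasurable]
  simp only [(measurePreserving_smul _ μ).lintegral_comp hF, lintegral_const, measure_univ,
    mul_one]

theorem smulInvariantMeasure_withDensity {M X : Type*} [SMul M X] [MeasurableSpace X]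
    [MeasurableConstSMul M X] (μ : Measure X) [SMulInvariantMeasure M X μ] {f : X → ENNReal}
    (hf : Measurable f) (hf_smul : ∀ (g : M) (x : X), f (g • x) = f x) :
    SMulInvariantMeasure M X (μ.withDensity f) where
  measure_preimage_smul g s hs := by
    have := (measurePreserving_smul g μ).setLIntegral_comp_preimage hs hf
    simpa only [withDensity_apply _ hs, withDensity_apply _ (measurable_const_smul g hs), hf_smul]

instance smulInvariantMeasure_circle_volume {ι κ : Type*} [Fintype ι] [Fintype κ] :
    SMulInvariantMeasure Circle ((ι → ℂ) × (κ → ℂ)) volume where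
  measure_preimage_smul u s hs := by
    have hrotate : MeasurePreserving (fun z : ℂ => u • z) := (rotation u).measurePreserving
    exact ((volume_preserving_pi fun _ : ι => hrotate).prod
      (volume_preserving_pi fun _ : κ => hrotate)).measure_preimage hs.nullMeasurableSet

variable {V : Type*} [NormedAddCommGroup V] [NormedSpace ℂ V] [FiniteDimensional ℂ V]
  [MeasurableSpace V] [BorelSpace V] (μ : Measure V) [SFinite μ] [SMulInvariantMeasure Circle V μ]
  {G : V → ℂ}

theorem lintegral_enorm_sq_sub_sum_homogeneousPart (hG : Differentiable ℂ G) (N : ℕ) :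
    ∫⁻ q, ‖G q - ∑ k ∈ Finset.range N, homogeneousPart G k q‖ₑ ^ 2 ∂μ =
      ∑' k, ∫⁻ q, ‖homogeneousPart G (k + N) q‖ₑ ^ 2 ∂μ := by
  have : ProperSpace V := FiniteDimensional.proper ℂ V
  have hG_meas : Measurable G := hG.continuous.measurable
  have hpart (k : ℕ) : Measurable (homogeneousPart G k) :=
    (homogeneousPart.differentiable hG k).continuous.measurable
  have haction : Measurable fun p : V × UnitAddCircle => AddCircle.toCircle p.2 • p.1 := by
    refine Continuous.measurable ?_
    fun_prop
  rw [← lintegral_lintegral_smul_eq AddCircle.haarAddCircle μ haction (by fun_prop),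
    ← lintegral_tsum (by fun_prop)]
  refine lintegral_congr fun q => ?_
  refine lintegral_enorm_sq_eq_tsum_of_hasSum_fourier (φ := fun k : ℕ => (k + N : ℤ))
    (fun i j hij => by simpa using hij)
    ((summable_nat_add_iff N).2 (homogeneousPart.summable_norm hG q)) fun θ => ?_
  convert! homogeneousPart.hasSum_tail hG N q (AddCircle.toCircle θ) using 3 with k
  rw [fourier_apply, ← Nat.cast_add, natCast_zsmul, AddCircle.toCircle_nsmul, Circle.coe_pow]

theorem tendsto_lintegral_enorm_sq_sub_sum_homogeneousPart (hG : Differentiable ℂ G)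
    (hint : ∫⁻ q, ‖G q‖ₑ ^ 2 ∂μ ≠ ⊤) :
    Tendsto (fun N => ∫⁻ q, ‖G q - ∑ k ∈ Finset.range N, homogeneousPart G k q‖ₑ ^ 2 ∂μ)
      atTop (𝓝 0) := by
  have hnorm := lintegral_enorm_sq_sub_sum_homogeneousPart μ hG 0
  simp only [Finset.range_zero, Finset.sum_empty, sub_zero, add_zero] at hnorm
  simp only [lintegral_enorm_sq_sub_sum_homogeneousPart μ hG]
  exact ENNReal.tendsto_sum_nat_add _ (hnorm ▸ hint)

end CircleInvariantMeasure

theorem integrable_norm_pow_mul_exp_neg_mul_sq {E : Type*} [NormedAddCommGroup E]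
    [NormedSpace ℝ E] [Nontrivial E] [FiniteDimensional ℝ E] [MeasurableSpace E] [BorelSpace E]
    (μ : Measure E) [μ.IsAddHaarMeasure] {b : ℝ} (hb : 0 < b) (k : ℕ) :
    Integrable (fun x => ‖x‖ ^ k * Real.exp (-b * ‖x‖ ^ 2)) μ := by
  rw [integrable_fun_norm_addHaar μ (f := fun y => y ^ k * Real.exp (-b * y ^ 2))]
  have hpos : (-1 : ℝ) < (Module.finrank ℝ E - 1 + k : ℕ) :=
    neg_one_lt_zero.trans_le (Nat.cast_nonneg _)
  simpa only [Real.rpow_natCast, pow_add, mul_assoc, smul_eq_mul] using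
    integrableOn_rpow_mul_exp_neg_mul_sq hb hpos

section Weight

variable {n : ℕ} {t lam : ℝ}

theorem WF_nonneg (z w : Fin n → ℂ) : 0 ≤ WF n t lam z w := by
  unfold WF
  positivity

@[fun_prop]
theorem continuous_WF :
    Continuous fun q : (Fin n → ℂ) × (Fin n → ℂ) => WF n t lam q.1 q.2 := by
  unfold WF
  fun_prop

theorem WF_circle_smul (u : Circle) (z w : Fin n → ℂ) :
    WF n t lam (u • z) (u • w) = WF n t lam z w := by
  have hpairing (j : Fin n) :
      (u • z) j * (starRingEnd ℂ) ((u • w) j) = z j * (starRingEnd ℂ) (w j) := by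
    simp only [Pi.smul_apply, Circle.smul_def, smul_eq_mul, map_mul]
    rw [mul_mul_mul_comm, mul_conj, Circle.normSq_coe, ofReal_one, one_mul]
  have hnorm (z : Fin n → ℂ) (j : Fin n) : ‖(u • z) j‖ = ‖z j‖ := Circle.norm_smul u (z j)
  simp only [WF, hpairing, hnorm]

theorem abs_div_two_lt_div_two_mul_cothR (ht : 0 < t) (hlam : lam ≠ 0) :
    |lam| / 2 < lam / 2 * cothR (2 * t * lam) := by
  have one_lt_cothR {x : ℝ} (hx : 0 < x) : 1 < cothR x :=
    (one_lt_div (Real.sinh_pos_iff.2 hx)).2 (Real.sinh_lt_cosh x)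
  have heven : lam * cothR (2 * t * lam) = |lam| * cothR (2 * t * |lam|) := by
    rcases abs_choice lam with h | h <;> simp [h, cothR, div_neg]
  have := one_lt_cothR (x := 2 * t * |lam|) (by positivity)
  nlinarith [abs_pos.2 hlam]

theorem mul_sum_im_mul_conj_le (z w : Fin n → ℂ) :
    lam * ∑ j, (z j * (starRingEnd ℂ) (w j)).im ≤
      |lam| / 2 * ((∑ j, ‖z j‖ ^ 2) + ∑ j, ‖w j‖ ^ 2) := by
  rw [← Finset.sum_add_distrib, Finset.mul_sum, Finset.mul_sum]
  refine Finset.sum_le_sum fun j _ => ?_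
  have him : |(z j * (starRingEnd ℂ) (w j)).im| ≤ ‖z j‖ * ‖w j‖ := by
    simpa using abs_im_le_norm (z j * (starRingEnd ℂ) (w j))
  calc lam * (z j * (starRingEnd ℂ) (w j)).im
      ≤ |lam| * |(z j * (starRingEnd ℂ) (w j)).im| := abs_mul lam _ ▸ le_abs_self _
    _ ≤ |lam| * (‖z j‖ * ‖w j‖) := by gcongr
    _ ≤ |lam| / 2 * (‖z j‖ ^ 2 + ‖w j‖ ^ 2) := by
      nlinarith [abs_nonneg lam, sq_nonneg (‖z j‖ - ‖w j‖)]

theorem WF_le_exp (z w : Fin n → ℂ) :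
    WF n t lam z w ≤ Real.exp (-(lam / 2 * cothR (2 * t * lam) - |lam| / 2) *
      ((∑ j, ‖z j‖ ^ 2) + ∑ j, ‖w j‖ ^ 2)) := by
  rw [WF, ← Real.exp_add, Real.exp_le_exp]
  linarith [mul_sum_im_mul_conj_le (lam := lam) z w]

end Weight

section Monomial

variable {n : ℕ}

theorem differentiable_monomial (α β : Fin n → ℕ) : Differentiable ℂ (monomial n α β) := by
  unfold monomial
  fun_prop

theorem norm_monomial_sq (α β : Fin n → ℕ) (q : (Fin n → ℂ) × (Fin n → ℂ)) :
    ‖monomial n α β q‖ ^ 2 = (∏ j, ‖q.1 j‖ ^ (2 * α j)) * ∏ j, ‖q.2 j‖ ^ (2 * β j) := by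
  simp only [monomial, norm_mul, norm_prod, norm_pow, mul_pow, ← Finset.prod_pow, ← pow_mul,
    mul_comm 2]

theorem integrable_prod_norm_pow_mul_exp {b : ℝ} (hb : 0 < b) (α : Fin n → ℕ) :
    Integrable fun z : Fin n → ℂ =>
      (∏ j, ‖z j‖ ^ α j) * Real.exp (-b * ∑ j, ‖z j‖ ^ 2) := by
  simp only [Finset.mul_sum, Real.exp_sum, ← Finset.prod_mul_distrib]
  exact Integrable.fintype_prod (f := fun j (z : ℂ) => ‖z‖ ^ α j * Real.exp (-b * ‖z‖ ^ 2))
    fun j => integrable_norm_pow_mul_exp_neg_mul_sq volume hb (α j)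

theorem fockMem_monomial {t lam : ℝ} (ht : 0 < t) (hlam : lam ≠ 0) (α β : Fin n → ℕ) :
    FockMem n t lam (monomial n α β) := by
  refine ⟨differentiable_monomial α β, ?_⟩
  have hδ := sub_pos.2 (abs_div_two_lt_div_two_mul_cothR ht hlam)
  have hcont := (differentiable_monomial α β).continuous
  refine ((integrable_prod_norm_pow_mul_exp hδ fun j => 2 * α j).mul_prod
    (integrable_prod_norm_pow_mul_exp hδ fun j => 2 * β j)).mono'
    (Continuous.aestronglyMeasurable (by fun_prop)) (.of_forall fun q => ?_)
  rw [Real.norm_of_nonneg (mul_nonneg (sq_nonneg _) (WF_nonneg _ _)), mul_mul_mul_comm,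
    ← Real.exp_add, ← mul_add, ← norm_monomial_sq]
  gcongr
  exact WF_le_exp q.1 q.2

theorem mem_span_monomial_of_isHomogeneousOfDegree {k : ℕ} {g : (Fin n → ℂ) × (Fin n → ℂ) → ℂ}
    (hhom : IsHomogeneousOfDegree k g) (hg : Differentiable ℂ g) :
    g ∈ Submodule.span ℂ {g | ∃ α β : Fin n → ℕ, g = monomial n α β} := by
  obtain ⟨p, hp⟩ := hhom.exists_mvPolynomial_eval
    ((Pi.basisFun ℂ (Fin n)).prod (Pi.basisFun ℂ (Fin n))) hg
  have hsum : g = ∑ d ∈ p.support, p.coeff d •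
      monomial n (fun j => d (Sum.inl j)) (fun j => d (Sum.inr j)) := by
    ext q
    rw [hp, MvPolynomial.eval_eq']
    simp [monomial, Fintype.prod_sum_type]
  rw [hsum]
  exact Submodule.sum_mem _ fun d _ => Submodule.smul_mem _ _ (Submodule.subset_span ⟨_, _, rfl⟩)

end Monomial

section FockMeasure

/-- The measure `𝒲_t^λ(z,w) dz dw`, whose `L²` norm is the norm of the twisted Fock space. -/
def fockMeasure (n : ℕ) (t lam : ℝ) : Measure ((Fin n → ℂ) × (Fin n → ℂ)) :=
  volume.withDensity fun q => ENNReal.ofReal (WF n t lam q.1 q.2)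

variable {n : ℕ} {t lam : ℝ} {f : (Fin n → ℂ) × (Fin n → ℂ) → ℂ}

instance : SFinite (fockMeasure n t lam) := by
  unfold fockMeasure
  infer_instance

instance : SMulInvariantMeasure Circle ((Fin n → ℂ) × (Fin n → ℂ)) (fockMeasure n t lam) :=
  smulInvariantMeasure_withDensity volume (by fun_prop) fun u q =>
    congrArg ENNReal.ofReal (WF_circle_smul u q.1 q.2)

theorem lintegral_enorm_sq_fockMeasure (hf : Measurable f) :
    ∫⁻ q, ‖f q‖ₑ ^ 2 ∂fockMeasure n t lam =
      ∫⁻ q, ENNReal.ofReal (‖f q‖ ^ 2 * WF n t lam q.1 q.2) := by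
  rw [fockMeasure, lintegral_withDensity_eq_lintegral_mul _ (by fun_prop) (by fun_prop)]
  refine lintegral_congr fun q => ?_
  rw [Pi.mul_apply, mul_comm, ENNReal.ofReal_mul (sq_nonneg _),
    ENNReal.ofReal_pow (norm_nonneg _), ofReal_norm]

theorem integral_norm_sq_mul_WF (hf : Measurable f) :
    ∫ q, ‖f q‖ ^ 2 * WF n t lam q.1 q.2 = (∫⁻ q, ‖f q‖ₑ ^ 2 ∂fockMeasure n t lam).toReal := by
  rw [lintegral_enorm_sq_fockMeasure hf]
  refine integral_eq_lintegral_of_nonneg_ae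
    (.of_forall fun q => mul_nonneg (sq_nonneg _) (WF_nonneg _ _)) ?_
  exact Measurable.aestronglyMeasurable (by fun_prop)

theorem FockMem.lintegral_enorm_sq_ne_top (hf : FockMem n t lam f) :
    ∫⁻ q, ‖f q‖ₑ ^ 2 ∂fockMeasure n t lam ≠ ⊤ := by
  rw [lintegral_enorm_sq_fockMeasure hf.1.continuous.measurable]
  exact hf.2.lintegral_lt_top.ne

theorem FockMem.tendsto_integral_sub_sum_homogeneousPart (hf : FockMem n t lam f) :
    Tendsto (fun N => ∫ q, ‖f q - ∑ k ∈ Finset.range N, homogeneousPart f k q‖ ^ 2 *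
      WF n t lam q.1 q.2) atTop (𝓝 0) := by
  have hf_meas : Measurable f := hf.1.continuous.measurable
  have hpart (k : ℕ) : Measurable (homogeneousPart f k) :=
    (homogeneousPart.differentiable hf.1 k).continuous.measurable
  have hmeas (N : ℕ) : Measurable fun q => f q - ∑ k ∈ Finset.range N, homogeneousPart f k q := by
    fun_prop
  simpa only [integral_norm_sq_mul_WF (hmeas _), ENNReal.toReal_zero, Function.comp_def] using
    (ENNReal.tendsto_toReal ENNReal.zero_ne_top).comp
      (tendsto_lintegral_enorm_sq_sub_sum_homogeneousPart _ hf.1 hf.lintegral_enorm_sq_ne_top)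

end FockMeasure

/-- Every monomial `(z,w) ↦ z^α w^β` belongs to the twisted Fock space
`ℱ_t^λ(ℂ^{2n})`, and the linear span of the monomials is dense in `ℱ_t^λ(ℂ^{2n})` with respect
to the weighted `L²` norm. -/
theorem monomials_dense_in_twisted_Fock
    (n : ℕ) (hn : 1 ≤ n) (t lam : ℝ) (ht : 0 < t) (hlam : lam ≠ 0) :
    (∀ α β : Fin n → ℕ, FockMem n t lam (monomial n α β)) ∧
    (∀ G : (Fin n → ℂ) × (Fin n → ℂ) → ℂ, FockMem n t lam G → ∀ ε : ℝ, 0 < ε →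
      ∃ P ∈ Submodule.span ℂ {g : (Fin n → ℂ) × (Fin n → ℂ) → ℂ |
          ∃ α β : Fin n → ℕ, g = monomial n α β},
        ∫ q : (Fin n → ℂ) × (Fin n → ℂ), ‖G q - P q‖ ^ 2 * WF n t lam q.1 q.2 < ε) := by
  refine ⟨fockMem_monomial ht hlam, fun G hG ε hε => ?_⟩
  obtain ⟨N, hN⟩ := (hG.tendsto_integral_sub_sum_homogeneousPart.eventually_lt_const hε).exists
  refine ⟨∑ k ∈ Finset.range N, homogeneousPart G k, Submodule.sum_mem _ fun k _ => ?_, ?_⟩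
  · exact mem_span_monomial_of_isHomogeneousOfDegree
      (homogeneousPart.isHomogeneousOfDegree hG.1 k) (homogeneousPart.differentiable hG.1 k)
  · simpa only [Finset.sum_apply] using hN
end
end

section
/- Let n ≥ 1 be an integer and t > 0. For every Schwartz function f on ℝ^{2n+1} one has the Plancherel-type identity ∫_{ℝ^{2n+1}} |f(x,u,ξ)|² dx du dξ = (2π)^{-1} ∫_{ℝ\{0}} ( ∫_{ℂ^{2n}} |H_t^λ(f^λ)(z,w)|² W_t^λ(z,w) dz dw ) dλ. (This identity expresses that the heat kernel transform on the Heisenberg group identifies L²(ℝ^{2n+1}) with the direct integral over λ of the λ-twisted Bergman spaces with density e^{2tλ²} dλ.) -/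
open MeasureTheory Complex Filter Topology

noncomputable section

/-- The λ-twisted heat kernel transform. -/
def HT (n : ℕ) (t lam : ℝ) (f : (Fin n → ℝ) × (Fin n → ℝ) → ℂ) (z w : Fin n → ℂ) : ℂ :=
  ∫ p : (Fin n → ℝ) × (Fin n → ℝ),
    f p * pC n t lam (z - embC p.1) (w - embC p.2) *
      Complex.exp (-(Complex.I * lam / 2) * (dotC (embC p.1) w - dotC (embC p.2) z))

/-- The partial (inverse) Fourier transform in the central variable:
`f^λ(x,u) = ∫_ℝ e^{iλξ} f(x,u,ξ) dξ`. -/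
def partialFT (n : ℕ) (f : (Fin n → ℝ) × (Fin n → ℝ) × ℝ → ℂ) (lam : ℝ)
    (p : (Fin n → ℝ) × (Fin n → ℝ)) : ℂ :=
  ∫ ξ : ℝ, Complex.exp (Complex.I * lam * ξ) * f (p.1, p.2, ξ)

/-!
Apart from an explicit Gaussian factor, which the weight `W_t^λ` cancels exactly, the twisted heat
transform of `g` is a short-time Fourier transform of `g` with a Gaussian window, sampled at a
real-linear function of the real and imaginary parts of the point. The short-time Fourier transform
is an isometry up to a constant, by Plancherel in the integration variable and translation
invariance in the position of the window; the linear change of variables has determinant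
`(λ / sinh 2tλ)^{2n}`. All constants multiply to one, so for `λ ≠ 0` the inner integral is
`∫ |g|²`. With `g = f^λ`, Plancherel in the central variable finishes the proof.
-/

open scoped FourierTransform RealInnerProductSpace ENNReal

section Plancherel

theorem lintegral_enorm_sq_eq_eLpNorm_sq {α E : Type*} [MeasurableSpace α] {μ : Measure α}
    [NormedAddCommGroup E] (f : α → E) : ∫⁻ x, ‖f x‖ₑ ^ 2 ∂μ = eLpNorm f 2 μ ^ 2 := by
  simpa using (eLpNorm_nnreal_pow_eq_lintegral (f := f) (μ := μ) (p := 2) two_ne_zero).symm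

theorem memLp_two_iff_lintegral_enorm_sq_lt_top {α E : Type*} [MeasurableSpace α] {μ : Measure α}
    [NormedAddCommGroup E] {f : α → E} (hf : AEStronglyMeasurable f μ) :
    MemLp f 2 μ ↔ ∫⁻ x, ‖f x‖ₑ ^ 2 ∂μ < ∞ := by
  simp [MemLp, hf, lintegral_enorm_sq_eq_eLpNorm_sq, ENNReal.pow_lt_top_iff]

theorem integral_norm_sq_eq_toReal_lintegral {α E : Type*} [MeasurableSpace α] {μ : Measure α}
    [NormedAddCommGroup E] {f : α → E} (hf : AEStronglyMeasurable f μ) :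
    ∫ x, ‖f x‖ ^ 2 ∂μ = (∫⁻ x, ‖f x‖ₑ ^ 2 ∂μ).toReal := by
  rw [← integral_toReal (hf.enorm.pow_const 2) (by simp)]
  simp

theorem ae_memLp_two_prodMk_left {α β E : Type*} [MeasurableSpace α] [MeasurableSpace β]
    {μ : Measure α} {ν : Measure β} [SFinite ν] [NormedAddCommGroup E] {f : α × β → E}
    (hf : MemLp f 2 (μ.prod ν)) : ∀ᵐ a ∂μ, MemLp (fun b ↦ f (a, b)) 2 ν := by
  have hmeas := hf.aestronglyMeasurable
  have hfin : ∀ᵐ a ∂μ, ∫⁻ b, ‖f (a, b)‖ₑ ^ 2 ∂ν < ∞ := by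
    refine ae_lt_top' (hmeas.enorm.pow_const 2).lintegral_prod_right' ?_
    rw [← lintegral_prod _ (hmeas.enorm.pow_const 2)]
    exact ((memLp_two_iff_lintegral_enorm_sq_lt_top hmeas).1 hf).ne
  filter_upwards [hmeas.prodMk_left, hfin] with a ha hlt
  exact (memLp_two_iff_lintegral_enorm_sq_lt_top ha).2 hlt

variable {V H : Type*} [NormedAddCommGroup V] [InnerProductSpace ℝ V] [FiniteDimensional ℝ V]
  [MeasurableSpace V] [BorelSpace V]
  [NormedAddCommGroup H] [InnerProductSpace ℂ H]

/-- The Fourier transform `y ↦ ∫ e^{i⟨x,y⟩} F x dx` in the angular normalization, the one in which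
both `partialFT` and `HT` are written; `𝓕` has `-2π` in the exponent instead. -/
def angularFourier (F : V → H) (y : V) : H := ∫ x, cexp (I * ⟪x, y⟫) • F x

theorem angularFourier_eq_fourier (F : V → H) (y : V) :
    angularFourier F y = 𝓕 F ((-(2 * Real.pi)⁻¹) • y) := by
  rw [Real.fourier_eq', angularFourier]
  congr! 4 with x
  rw [real_inner_smul_right]
  push_cast
  have := Real.pi_ne_zero
  field_simp

variable [CompleteSpace H]

-- Both sides define the same tempered distribution, so they agree against every test function.
theorem fourier_toLp_ae_eq {F : V → H} (hF₁ : Integrable F) (hF₂ : MemLp F 2) :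
    (𝓕 (hF₂.toLp F) : Lp H 2 (volume : Measure V)) =ᵐ[volume] 𝓕 F := by
  have hcont : Continuous (𝓕 F) :=
    VectorFourier.fourierIntegral_continuous Real.continuous_fourierChar
      (innerSL ℝ).continuous₂ hF₁
  refine ae_eq_of_integral_contDiff_smul_eq ((Lp.memLp _).locallyIntegrable (by norm_num))
    hcont.locallyIntegrable fun g hg hsupp ↦ ?_
  let G : SchwartzMap V ℂ := (hsupp.comp_left (g := Complex.ofRealCLM) rfl).toSchwartzMap
    (by fun_prop)
  have hG (u : V → H) : ∫ x, g x • u x = ∫ x, G x • u x := by simp [G]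
  have hdist : ∫ x, 𝓕 G x • (hF₂.toLp F) x
      = ∫ x, G x • (𝓕 (hF₂.toLp F) : Lp H 2 (volume : Measure V)) x :=
    by simpa only [TemperedDistribution.fourier_apply, Lp.toTemperedDistribution_apply] using
      congrArg (fun T ↦ T G) (Lp.fourier_toTemperedDistribution_eq (hF₂.toLp F))
  calc ∫ x, g x • (𝓕 (hF₂.toLp F) : Lp H 2 (volume : Measure V)) x
      = ∫ x, 𝓕 G x • (hF₂.toLp F) x := by rw [hG, hdist]
    _ = ∫ x, 𝓕 G x • F x :=
        integral_congr_ae (hF₂.coeFn_toLp.mono fun x hx ↦ by simp only [hx])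
    _ = ∫ x, G x • 𝓕 F x := by
        simpa only [flip_innerₗ] using!
          VectorFourier.integral_fourierIntegral_smul_eq_flip (L := innerₗ V)
            Real.continuous_fourierChar (innerSL ℝ).continuous₂ G.integrable hF₁
    _ = ∫ x, g x • 𝓕 F x := (hG _).symm

theorem eLpNorm_fourier_eq {F : V → H} (hF₁ : Integrable F) (hF₂ : MemLp F 2) :
    eLpNorm (𝓕 F) 2 volume = eLpNorm F 2 volume := by
  rw [← eLpNorm_congr_ae (fourier_toLp_ae_eq hF₁ hF₂), ← eLpNorm_congr_ae hF₂.coeFn_toLp,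
    ← ENNReal.toReal_eq_toReal_iff' (Lp.eLpNorm_ne_top _) (Lp.eLpNorm_ne_top _),
    ← Lp.norm_def, ← Lp.norm_def, Lp.norm_fourier_eq]

theorem lintegral_comp_smul {E : Type*} [NormedAddCommGroup E] [NormedSpace ℝ E]
    [FiniteDimensional ℝ E] [MeasurableSpace E] [BorelSpace E] (μ : Measure E) [μ.IsAddHaarMeasure]
    (Φ : E → ℝ≥0∞) {r : ℝ} (hr : r ≠ 0) :
    ∫⁻ x, Φ (r • x) ∂μ = ENNReal.ofReal |(r ^ Module.finrank ℝ E)⁻¹| * ∫⁻ x, Φ x ∂μ := by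
  rw [← smul_eq_mul, ← lintegral_smul_measure, ← Measure.map_addHaar_smul μ hr]
  exact ((Homeomorph.smulOfNeZero r hr).measurableEmbedding.lintegral_map _).symm

theorem lintegral_enorm_sq_angularFourier {F : V → H} (hF₁ : Integrable F) (hF₂ : MemLp F 2) :
    ∫⁻ y, ‖angularFourier F y‖ₑ ^ 2
      = ENNReal.ofReal ((2 * Real.pi) ^ Module.finrank ℝ V) * ∫⁻ x, ‖F x‖ₑ ^ 2 := by
  have hr : -(2 * Real.pi)⁻¹ ≠ 0 := by simp [Real.pi_ne_zero]
  simp_rw [angularFourier_eq_fourier]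
  rw [lintegral_comp_smul volume (fun y ↦ ‖𝓕 F y‖ₑ ^ 2) hr, lintegral_enorm_sq_eq_eLpNorm_sq,
    eLpNorm_fourier_eq hF₁ hF₂, lintegral_enorm_sq_eq_eLpNorm_sq]
  congr 2
  rw [abs_inv, abs_pow, abs_neg, abs_of_pos (inv_pos.2 Real.two_pi_pos), inv_pow, inv_inv]

end Plancherel

section PartialFourier

variable {α V H : Type*} [MeasurableSpace α] {μ : Measure α}
  [NormedAddCommGroup V] [InnerProductSpace ℝ V] [FiniteDimensional ℝ V]
  [MeasurableSpace V] [BorelSpace V] [NormedAddCommGroup H] [InnerProductSpace ℂ H]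

/-- The angular Fourier transform in the second variable only, the first one being a parameter. -/
def partialFourier (f : α × V → H) (z : α × V) : H := angularFourier (fun x ↦ f (z.1, x)) z.2

theorem aestronglyMeasurable_partialFourier [SFinite μ] {f : α × V → H}
    (hf : AEStronglyMeasurable f (μ.prod volume)) :
    AEStronglyMeasurable (partialFourier f) (μ.prod volume) := by
  have hfst : Measure.QuasiMeasurePreserving
      (fun w : (α × V) × V ↦ (w.1.1, w.2)) ((μ.prod volume).prod volume) (μ.prod volume) :=
    QuasiMeasurePreserving.prodMap Measure.quasiMeasurePreserving_fst (.id volume)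
  have hphase : Continuous fun w : V × V ↦ cexp (I * ⟪w.2, w.1⟫) := by fun_prop
  exact ((hphase.measurable.comp
    (measurable_fst.snd.prodMk measurable_snd)).aestronglyMeasurable.smul
      (hf.comp_quasiMeasurePreserving hfst)).integral_prod_right'

variable [CompleteSpace H] [SFinite μ]

theorem lintegral_enorm_sq_partialFourier {f : α × V → H}
    (hf₁ : ∀ᵐ a ∂μ, Integrable fun x ↦ f (a, x)) (hf₂ : MemLp f 2 (μ.prod volume)) :
    ∫⁻ z, ‖partialFourier f z‖ₑ ^ 2 ∂μ.prod volume
      = ENNReal.ofReal ((2 * Real.pi) ^ Module.finrank ℝ V)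
        * ∫⁻ z, ‖f z‖ₑ ^ 2 ∂μ.prod volume := by
  have hf := hf₂.aestronglyMeasurable
  rw [lintegral_prod _ ((aestronglyMeasurable_partialFourier hf).enorm.pow_const 2),
    lintegral_prod _ (hf.enorm.pow_const 2), ← lintegral_const_mul' _ _ ENNReal.ofReal_ne_top]
  refine lintegral_congr_ae ?_
  filter_upwards [hf₁, ae_memLp_two_prodMk_left hf₂] with a ha₁ ha₂
  exact lintegral_enorm_sq_angularFourier ha₁ ha₂

theorem memLp_partialFourier {f : α × V → H}
    (hf₁ : ∀ᵐ a ∂μ, Integrable fun x ↦ f (a, x)) (hf₂ : MemLp f 2 (μ.prod volume)) :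
    MemLp (partialFourier f) 2 (μ.prod volume) := by
  have hf := hf₂.aestronglyMeasurable
  rw [memLp_two_iff_lintegral_enorm_sq_lt_top (aestronglyMeasurable_partialFourier hf),
    lintegral_enorm_sq_partialFourier hf₁ hf₂]
  exact ENNReal.mul_lt_top ENNReal.ofReal_lt_top
    ((memLp_two_iff_lintegral_enorm_sq_lt_top hf).1 hf₂)

theorem integral_norm_sq_partialFourier {f : α × V → H}
    (hf₁ : ∀ᵐ a ∂μ, Integrable fun x ↦ f (a, x)) (hf₂ : MemLp f 2 (μ.prod volume)) :
    ∫ z, ‖partialFourier f z‖ ^ 2 ∂μ.prod volume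
      = (2 * Real.pi) ^ Module.finrank ℝ V * ∫ z, ‖f z‖ ^ 2 ∂μ.prod volume := by
  have hf := hf₂.aestronglyMeasurable
  rw [integral_norm_sq_eq_toReal_lintegral (aestronglyMeasurable_partialFourier hf),
    integral_norm_sq_eq_toReal_lintegral hf, lintegral_enorm_sq_partialFourier hf₁ hf₂,
    ENNReal.toReal_mul, ENNReal.toReal_ofReal (by positivity)]

end PartialFourier

section ShortTimeFourier

variable {V : Type*} [NormedAddCommGroup V] [InnerProductSpace ℝ V] [FiniteDimensional ℝ V]
  [MeasurableSpace V] [BorelSpace V]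

/-- The short-time Fourier transform of `g` with window `φ`, at position `z.1` and frequency `z.2`.
The window is reflected, which does not matter for the even Gaussian used here. -/
def shortTimeFourier (φ g : V → ℂ) : V × V → ℂ := partialFourier fun z ↦ φ (z.1 - z.2) * g z.2

variable {φ g : V → ℂ}

theorem aestronglyMeasurable_window_mul (hφ : AEStronglyMeasurable φ)
    (hg : AEStronglyMeasurable g) :
    AEStronglyMeasurable (fun z : V × V ↦ φ (z.1 - z.2) * g z.2) (volume.prod volume) := by
  simpa [mul_comm] using hg.convolution_integrand (ContinuousLinearMap.mul ℝ ℂ) hφ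

theorem aestronglyMeasurable_shortTimeFourier (hφ : AEStronglyMeasurable φ)
    (hg : AEStronglyMeasurable g) :
    AEStronglyMeasurable (shortTimeFourier φ g) (volume.prod volume) :=
  aestronglyMeasurable_partialFourier (aestronglyMeasurable_window_mul hφ hg)

theorem lintegral_enorm_sq_window_mul (hφ : AEStronglyMeasurable φ)
    (hg : AEStronglyMeasurable g) :
    ∫⁻ z : V × V, ‖φ (z.1 - z.2) * g z.2‖ₑ ^ 2 ∂volume.prod volume
      = (∫⁻ x, ‖φ x‖ₑ ^ 2) * ∫⁻ x, ‖g x‖ₑ ^ 2 := by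
  rw [lintegral_prod_symm _ ((aestronglyMeasurable_window_mul hφ hg).enorm.pow_const 2)]
  calc ∫⁻ p, ∫⁻ x, ‖φ (x - p) * g p‖ₑ ^ 2
      = ∫⁻ p, (∫⁻ x, ‖φ x‖ₑ ^ 2) * ‖g p‖ₑ ^ 2 := lintegral_congr fun p ↦ by
        simp_rw [enorm_mul, mul_pow]
        rw [lintegral_mul_const' _ _ (by simp),
          lintegral_sub_right_eq_self (fun x ↦ ‖φ x‖ₑ ^ 2) p]
    _ = (∫⁻ x, ‖φ x‖ₑ ^ 2) * ∫⁻ x, ‖g x‖ₑ ^ 2 :=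
        lintegral_const_mul'' _ (hg.enorm.pow_const 2)

theorem memLp_window_mul (hφ : MemLp φ 2) (hg : MemLp g 2) :
    MemLp (fun z : V × V ↦ φ (z.1 - z.2) * g z.2) 2 (volume.prod volume) := by
  have hφ' := hφ.aestronglyMeasurable
  have hg' := hg.aestronglyMeasurable
  rw [memLp_two_iff_lintegral_enorm_sq_lt_top (aestronglyMeasurable_window_mul hφ' hg'),
    lintegral_enorm_sq_window_mul hφ' hg']
  exact ENNReal.mul_lt_top ((memLp_two_iff_lintegral_enorm_sq_lt_top hφ').1 hφ)
    ((memLp_two_iff_lintegral_enorm_sq_lt_top hg').1 hg)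

theorem integral_norm_sq_shortTimeFourier (hφ : MemLp φ 2) (hg : MemLp g 2) :
    ∫ z, ‖shortTimeFourier φ g z‖ ^ 2 ∂volume.prod volume
      = (2 * Real.pi) ^ Module.finrank ℝ V * ((∫ x, ‖φ x‖ ^ 2) * ∫ x, ‖g x‖ ^ 2) := by
  have hint (x : V) : Integrable fun p ↦ φ (x - p) * g p :=
    (hφ.comp_measurePreserving (Measure.measurePreserving_sub_left volume x)).integrable_mul hg
  rw [shortTimeFourier, integral_norm_sq_partialFourier (.of_forall hint) (memLp_window_mul hφ hg),
    integral_norm_sq_eq_toReal_lintegral (memLp_window_mul hφ hg).aestronglyMeasurable,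
    lintegral_enorm_sq_window_mul hφ.aestronglyMeasurable hg.aestronglyMeasurable,
    ENNReal.toReal_mul, ← integral_norm_sq_eq_toReal_lintegral hφ.aestronglyMeasurable,
    ← integral_norm_sq_eq_toReal_lintegral hg.aestronglyMeasurable]

end ShortTimeFourier

section Gaussian

variable {V : Type*} [NormedAddCommGroup V]

/-- The centred Gaussian `v ↦ e^{-a‖v‖²}`, the window of the twisted heat transform. -/
def gaussianWindow (a : ℝ) (v : V) : ℂ := Real.exp (-a * ‖v‖ ^ 2)

theorem norm_gaussianWindow_sq (a : ℝ) (v : V) :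
    ‖gaussianWindow a v‖ ^ 2 = Real.exp (-(2 * a) * ‖v‖ ^ 2) := by
  rw [gaussianWindow, norm_real, Real.norm_of_nonneg (Real.exp_nonneg _), ← Real.exp_nat_mul]
  congr 1
  push_cast
  ring

variable [InnerProductSpace ℝ V] [FiniteDimensional ℝ V] [MeasurableSpace V] [BorelSpace V]

theorem integral_norm_gaussianWindow_sq {a : ℝ} (ha : 0 < a) :
    ∫ v : V, ‖gaussianWindow a v‖ ^ 2 = (Real.pi / (2 * a)) ^ (Module.finrank ℝ V / 2 : ℝ) := by
  simp_rw [norm_gaussianWindow_sq]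
  exact GaussianFourier.integral_rexp_neg_mul_sq_norm (by positivity)

theorem memLp_gaussianWindow {a : ℝ} (ha : 0 < a) : MemLp (gaussianWindow a : V → ℂ) 2 := by
  have hcont : Continuous (gaussianWindow a : V → ℂ) := by unfold gaussianWindow; fun_prop
  refine (memLp_two_iff_integrable_sq_norm hcont.aestronglyMeasurable).2 (.of_integral_ne_zero ?_)
  rw [integral_norm_gaussianWindow_sq ha]
  positivity

end Gaussian

section Shear

variable {V : Type*} [AddGroup V] [MeasurableSpace V] [MeasurableAdd₂ V]
  (μ : Measure V) [SFinite μ] [μ.IsAddRightInvariant] {A : V → V}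

theorem measurePreserving_shear_snd (hA : Measurable A) :
    MeasurePreserving (fun z : V × V ↦ (z.1, z.2 + A z.1)) (μ.prod μ) (μ.prod μ) :=
  (MeasurePreserving.id μ).skew_product (by fun_prop)
    (.of_forall fun x ↦ map_add_right_eq_self μ (A x))

theorem measurePreserving_shear_fst (hA : Measurable A) :
    MeasurePreserving (fun z : V × V ↦ (z.1 + A z.2, z.2)) (μ.prod μ) (μ.prod μ) :=
  (Measure.measurePreserving_swap.comp (measurePreserving_shear_snd μ hA)).comp
    Measure.measurePreserving_swap

end Shear

section Twist

variable {V : Type*} [NormedAddCommGroup V] [NormedSpace ℝ V]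

/-- The real-linear map `(X, Y) ↦ (X + σ J Y, r Y - m J X)`. Suitable coefficients turn the real and
imaginary parts of a point of `ℂ²ⁿ` into a position and a frequency. -/
def twist (J : V →L[ℝ] V) (σ r m : ℝ) (z : V × V) : V × V :=
  (z.1 + σ • J z.2, r • z.2 - m • J z.1)

variable [FiniteDimensional ℝ V] [MeasurableSpace V] [BorelSpace V]
  (μ : Measure V) [μ.IsAddHaarMeasure]

theorem map_prodMap_id_smul {r : ℝ} (hr : r ≠ 0) :
    (μ.prod μ).map (Prod.map id (r • ·))
      = ENNReal.ofReal |(r ^ Module.finrank ℝ V)⁻¹| • μ.prod μ := by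
  rw [← Measure.map_prod_map _ _ measurable_id (measurable_const_smul r),
    Measure.map_id, Measure.map_addHaar_smul μ hr, Measure.prod_smul_right]

-- `J² = -1` lets `twist` factor as a shear, a dilation by `r - m σ`, and another shear.
theorem map_twist {J : V →L[ℝ] V} (hJ : ∀ v, J (J v) = -v) {σ r m : ℝ} (hr : r - m * σ ≠ 0) :
    (μ.prod μ).map (twist J σ r m)
      = ENNReal.ofReal |((r - m * σ) ^ Module.finrank ℝ V)⁻¹| • μ.prod μ := by
  have hfst := measurePreserving_shear_fst μ (A := fun v ↦ σ • J v) (by fun_prop)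
  have hsnd := measurePreserving_shear_snd μ (A := fun v ↦ -(m • J v)) (by fun_prop)
  have hdil : Measurable (Prod.map id ((r - m * σ) • ·) : V × V → V × V) := by fun_prop
  have hfactor : twist J σ r m = (fun z : V × V ↦ (z.1, z.2 + -(m • J z.1))) ∘
      Prod.map id ((r - m * σ) • ·) ∘ fun z ↦ (z.1 + σ • J z.2, z.2) := by
    ext z
    · rfl
    · simp only [twist, Function.comp_apply, Prod.map_snd, Prod.map_fst, id, map_add, map_smul, hJ]
      module
  rw [hfactor, ← Measure.map_map hsnd.measurable (hdil.comp hfst.measurable),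
    ← Measure.map_map hdil hfst.measurable, hfst.map_eq, map_prodMap_id_smul μ hr,
    Measure.map_smul, hsnd.map_eq]

theorem integral_comp_twist {G : Type*} [NormedAddCommGroup G] [NormedSpace ℝ G]
    {J : V →L[ℝ] V} (hJ : ∀ v, J (J v) = -v) {σ r m : ℝ} (hr : r - m * σ ≠ 0) {Φ : V × V → G}
    (hΦ : AEStronglyMeasurable Φ (μ.prod μ)) :
    ∫ z, Φ (twist J σ r m z) ∂μ.prod μ
      = |((r - m * σ) ^ Module.finrank ℝ V)⁻¹| • ∫ z, Φ z ∂μ.prod μ := by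
  have hmap := map_twist μ hJ hr
  have htwist : Measurable (twist J σ r m) := by unfold twist; fun_prop
  rw [← integral_map htwist.aemeasurable (hmap ▸ hΦ.smul_measure _), hmap, integral_smul_measure,
    ENNReal.toReal_ofReal (abs_nonneg _)]

end Twist

section PhaseSpace

variable {n : ℕ}

/-- Phase space `ℝ²ⁿ` with its Euclidean norm; the product `(Fin n → ℝ) × (Fin n → ℝ)` carries the
sup norm instead. -/
abbrev PhaseSpace (n : ℕ) : Type := EuclideanSpace ℝ (Fin n ⊕ Fin n)

/-- The identification `(x, u) ↦ x ⊕ u` of `ℝⁿ × ℝⁿ` with phase space. -/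
def phaseEquiv (n : ℕ) : (Fin n → ℝ) × (Fin n → ℝ) ≃ᵐ PhaseSpace n :=
  (MeasurableEquiv.sumPiEquivProdPi fun _ : Fin n ⊕ Fin n ↦ ℝ).symm.trans (MeasurableEquiv.toLp 2 _)

/-- The identification `(x + iy, u + iv) ↦ (x ⊕ u, y ⊕ v)` of `ℂⁿ × ℂⁿ` with two copies of phase
space, the real and the imaginary part. -/
def complexPhaseEquiv (n : ℕ) :
    (Fin n → ℂ) × (Fin n → ℂ) ≃ᵐ PhaseSpace n × PhaseSpace n :=
  (MeasurableEquiv.sumPiEquivProdPi fun _ : Fin n ⊕ Fin n ↦ ℂ).symm.trans <|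
  (MeasurableEquiv.piCongrRight fun _ ↦ Complex.measurableEquivRealProd).trans <|
  (MeasurableEquiv.arrowProdEquivProdArrow ℝ ℝ (Fin n ⊕ Fin n)).trans <|
  (MeasurableEquiv.toLp 2 _).prodCongr (MeasurableEquiv.toLp 2 _)

theorem measurePreserving_phaseEquiv (n : ℕ) : MeasurePreserving (phaseEquiv n) :=
  (volume_measurePreserving_sumPiEquivProdPi_symm fun _ : Fin n ⊕ Fin n ↦ ℝ).trans
    (PiLp.volume_preserving_toLp _)

theorem measurePreserving_complexPhaseEquiv (n : ℕ) : MeasurePreserving (complexPhaseEquiv n) :=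
  (volume_measurePreserving_sumPiEquivProdPi_symm fun _ : Fin n ⊕ Fin n ↦ ℂ).trans <|
  (volume_preserving_pi fun _ : Fin n ⊕ Fin n ↦ Complex.volume_preserving_equiv_real_prod).trans <|
  (volume_measurePreserving_arrowProdEquivProdArrow ℝ ℝ (Fin n ⊕ Fin n)).trans <|
  (PiLp.volume_preserving_toLp _).prod (PiLp.volume_preserving_toLp _)

section Coordinates

variable (p : (Fin n → ℝ) × (Fin n → ℝ)) (q : (Fin n → ℂ) × (Fin n → ℂ)) (j : Fin n)

@[simp] theorem phaseEquiv_inl : phaseEquiv n p (.inl j) = p.1 j := rfl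

@[simp] theorem phaseEquiv_inr : phaseEquiv n p (.inr j) = p.2 j := rfl

@[simp] theorem complexPhaseEquiv_fst_inl : (complexPhaseEquiv n q).1 (.inl j) = (q.1 j).re := rfl

@[simp] theorem complexPhaseEquiv_fst_inr : (complexPhaseEquiv n q).1 (.inr j) = (q.2 j).re := rfl

@[simp] theorem complexPhaseEquiv_snd_inl : (complexPhaseEquiv n q).2 (.inl j) = (q.1 j).im := rfl

@[simp] theorem complexPhaseEquiv_snd_inr : (complexPhaseEquiv n q).2 (.inr j) = (q.2 j).im := rfl

end Coordinates

/-- The standard complex structure `x ⊕ u ↦ u ⊕ (-x)` of phase space, which carries the symplectic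
form in the exponents of `HT` and `Wt`. -/
def phaseRotation (n : ℕ) : PhaseSpace n →L[ℝ] PhaseSpace n :=
  LinearMap.toContinuousLinearMap
    { toFun v := WithLp.toLp 2 (Sum.elim (fun j ↦ v (.inr j)) fun j ↦ -v (.inl j))
      map_add' v w := by ext (j | j) <;> simp [add_comm]
      map_smul' c v := by ext (j | j) <;> simp }

@[simp] theorem phaseRotation_inl (v : PhaseSpace n) (j : Fin n) :
    phaseRotation n v (.inl j) = v (.inr j) := rfl

@[simp] theorem phaseRotation_inr (v : PhaseSpace n) (j : Fin n) :
    phaseRotation n v (.inr j) = -v (.inl j) := rfl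

theorem phaseRotation_phaseRotation (v : PhaseSpace n) :
    phaseRotation n (phaseRotation n v) = -v := by
  ext (j | j) <;> simp

theorem norm_phaseRotation (v : PhaseSpace n) : ‖phaseRotation n v‖ = ‖v‖ := by
  simp [EuclideanSpace.norm_eq, add_comm]

theorem complexPhaseEquiv_sub_embC (q : (Fin n → ℂ) × (Fin n → ℂ))
    (p : (Fin n → ℝ) × (Fin n → ℝ)) :
    complexPhaseEquiv n (q.1 - embC p.1, q.2 - embC p.2)
      = ((complexPhaseEquiv n q).1 - phaseEquiv n p, (complexPhaseEquiv n q).2) := by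
  ext (j | j) <;> simp [embC]

theorem dotC_self_add_dotC_self (q : (Fin n → ℂ) × (Fin n → ℂ)) :
    dotC q.1 q.1 + dotC q.2 q.2
      = ((‖(complexPhaseEquiv n q).1‖ ^ 2 - ‖(complexPhaseEquiv n q).2‖ ^ 2 : ℝ) : ℂ)
        + 2 * I * ⟪(complexPhaseEquiv n q).1, (complexPhaseEquiv n q).2⟫ := by
  apply Complex.ext
  · rw [EuclideanSpace.real_norm_sq_eq, EuclideanSpace.real_norm_sq_eq]
    simp [dotC, -ofReal_sub, -ofReal_pow, sq, sub_add_sub_comm]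
  · simp [dotC, PiLp.inner_apply, -ofReal_sub, -ofReal_pow, mul_comm, two_mul,
      Finset.sum_add_distrib, add_add_add_comm]

theorem dotC_embC_sub_dotC_embC (p : (Fin n → ℝ) × (Fin n → ℝ)) (q : (Fin n → ℂ) × (Fin n → ℂ)) :
    dotC (embC p.1) q.2 - dotC (embC p.2) q.1
      = ⟪phaseEquiv n p, phaseRotation n (complexPhaseEquiv n q).1⟫
        + I * ⟪phaseEquiv n p, phaseRotation n (complexPhaseEquiv n q).2⟫ := by
  apply Complex.ext <;> simp [dotC, embC, PiLp.inner_apply, mul_comm, sub_eq_add_neg]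

end PhaseSpace

section Exponent

variable {V : Type*} [NormedAddCommGroup V] [InnerProductSpace ℝ V]

theorem norm_add_smul_sub_sq (s : ℝ) (x w p : V) :
    ‖x + s • w - p‖ ^ 2 = ‖x - p‖ ^ 2 + 2 * s * (⟪x, w⟫ - ⟪p, w⟫) + s ^ 2 * ‖w‖ ^ 2 := by
  rw [add_sub_right_comm, norm_add_sq_real, real_inner_smul_right, inner_sub_left, norm_smul,
    mul_pow, Real.norm_eq_abs, sq_abs]
  ring

-- Completing the square in `p`.
theorem twisted_exponent_eq {J : V →L[ℝ] V} (hJ : ∀ v, ‖J v‖ = ‖v‖) {a : ℝ} (ha : a ≠ 0)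
    (lam : ℝ) (z : V × V) (p : V) :
    ((-a : ℝ) : ℂ) * (((‖z.1 - p‖ ^ 2 - ‖z.2‖ ^ 2 : ℝ) : ℂ) + 2 * I * ⟪z.1 - p, z.2⟫)
        + -(I * lam / 2) * (⟪p, J z.1⟫ + I * ⟪p, J z.2⟫)
      = ((((a + lam ^ 2 / (16 * a)) * ‖z.2‖ ^ 2 + lam / 2 * ⟪z.1, J z.2⟫ : ℝ) : ℂ)
          + ((-2 * a * ⟪z.1, z.2⟫ : ℝ) : ℂ) * I)
        + (I * ⟪p, (twist J (lam / (4 * a)) (2 * a) (lam / 2) z).2⟫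
          + ((-a * ‖(twist J (lam / (4 * a)) (2 * a) (lam / 2) z).1 - p‖ ^ 2 : ℝ) : ℂ)) := by
  simp only [twist, norm_add_smul_sub_sq, hJ, inner_sub_left, inner_sub_right,
    real_inner_smul_right]
  push_cast
  have ha' : (a : ℂ) ≠ 0 := ofReal_ne_zero.2 ha
  field_simp
  ring_nf
  simp only [I_sq]
  ring

end Exponent

section Coefficients

variable {t lam : ℝ}

/-- The Gaussian coefficient `a = (λ/4) coth(tλ)` in the exponent of the twisted heat kernel. -/
def heatCoeff (t lam : ℝ) : ℝ := lam / 4 * cothR (t * lam)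

theorem div_sinh_pos (ht : 0 < t) (hlam : lam ≠ 0) : 0 < lam / Real.sinh (t * lam) := by
  rcases hlam.lt_or_gt with h | h
  · exact div_pos_of_neg_of_neg h (Real.sinh_neg_iff.2 (mul_neg_of_pos_of_neg ht h))
  · exact div_pos h (Real.sinh_pos_iff.2 (mul_pos ht h))

theorem sinh_mul_ne_zero (ht : 0 < t) (hlam : lam ≠ 0) : Real.sinh (t * lam) ≠ 0 :=
  Real.sinh_ne_zero.2 (mul_ne_zero ht.ne' hlam)

theorem heatCoeff_pos (ht : 0 < t) (hlam : lam ≠ 0) : 0 < heatCoeff t lam := by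
  have h : heatCoeff t lam = lam / Real.sinh (t * lam) * Real.cosh (t * lam) / 4 := by
    rw [heatCoeff, cothR]
    ring
  have := div_sinh_pos ht hlam
  have := Real.cosh_pos (t * lam)
  rw [h]
  positivity

theorem div_sinh_two_mul (ht : 0 < t) (hlam : lam ≠ 0) :
    lam / Real.sinh (2 * t * lam)
      = 2 * heatCoeff t lam - lam / 2 * (lam / (4 * heatCoeff t lam)) := by
  have hs := sinh_mul_ne_zero ht hlam
  have hc := (Real.cosh_pos (t * lam)).ne'
  have hsq := Real.cosh_sq (t * lam)
  rw [heatCoeff, cothR, mul_assoc, Real.sinh_two_mul]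
  generalize t * lam = x at *
  field_simp
  linear_combination -4 * hsq

theorem mul_cothR_two_mul (ht : 0 < t) (hlam : lam ≠ 0) :
    lam / 4 * cothR (2 * t * lam) = (heatCoeff t lam + lam ^ 2 / (16 * heatCoeff t lam)) / 2 := by
  have hs := sinh_mul_ne_zero ht hlam
  have hc := (Real.cosh_pos (t * lam)).ne'
  rw [heatCoeff, cothR, cothR, mul_assoc, Real.sinh_two_mul, Real.cosh_two_mul]
  field_simp [hs, hc]
  ring

theorem div_sinh_sq (ht : 0 < t) (hlam : lam ≠ 0) :
    (lam / Real.sinh (t * lam)) ^ 2 = 8 * heatCoeff t lam * (lam / Real.sinh (2 * t * lam)) := by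
  have hs := sinh_mul_ne_zero ht hlam
  have hc := (Real.cosh_pos (t * lam)).ne'
  rw [heatCoeff, cothR, mul_assoc 2 t lam, Real.sinh_two_mul]
  field_simp [hs, hc]
  ring

end Coefficients

section TwistedHeatTransform

variable {n : ℕ} {t lam : ℝ}

/-- The position and frequency at which the short-time Fourier transform has to be sampled to obtain
the twisted heat transform at the point with real and imaginary parts `v`. -/
def heatTwist (n : ℕ) (t lam : ℝ) (v : PhaseSpace n × PhaseSpace n) :
    PhaseSpace n × PhaseSpace n :=
  twist (phaseRotation n) (lam / (4 * heatCoeff t lam)) (2 * heatCoeff t lam) (lam / 2) v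

/-- The logarithm of the Gaussian growth of the twisted heat transform at the point with real and
imaginary parts `v`. -/
def heatGrowth (n : ℕ) (t lam : ℝ) (v : PhaseSpace n × PhaseSpace n) : ℝ :=
  (heatCoeff t lam + lam ^ 2 / (16 * heatCoeff t lam)) * ‖v.2‖ ^ 2
    + lam / 2 * ⟪v.1, phaseRotation n v.2⟫

/-- The factor, free of the integrated function, by which the twisted heat transform differs from a
short-time Fourier transform. -/
def heatFactor (n : ℕ) (t lam : ℝ) (v : PhaseSpace n × PhaseSpace n) : ℂ :=
  ((((4 * Real.pi) ^ n)⁻¹ * (lam / Real.sinh (t * lam)) ^ n : ℝ) : ℂ)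
    * cexp (heatGrowth n t lam v + ((-2 * heatCoeff t lam * ⟪v.1, v.2⟫ : ℝ) : ℂ) * I)

theorem norm_heatFactor (ht : 0 < t) (hlam : lam ≠ 0) (v : PhaseSpace n × PhaseSpace n) :
    ‖heatFactor n t lam v‖
      = ((4 * Real.pi) ^ n)⁻¹ * (lam / Real.sinh (t * lam)) ^ n
        * Real.exp (heatGrowth n t lam v) := by
  have := div_sinh_pos ht hlam
  rw [heatFactor, norm_mul, norm_real, Real.norm_of_nonneg (by positivity), norm_exp, add_re,
    ofReal_re, re_ofReal_mul, I_re, mul_zero, add_zero]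

theorem pC_mul_exp_eq (ht : 0 < t) (hlam : lam ≠ 0) (p : (Fin n → ℝ) × (Fin n → ℝ))
    (q : (Fin n → ℂ) × (Fin n → ℂ)) :
    pC n t lam (q.1 - embC p.1) (q.2 - embC p.2)
        * cexp (-(I * lam / 2) * (dotC (embC p.1) q.2 - dotC (embC p.2) q.1))
      = heatFactor n t lam (complexPhaseEquiv n q)
        * (cexp (I * ⟪phaseEquiv n p, (heatTwist n t lam (complexPhaseEquiv n q)).2⟫)
          * gaussianWindow (heatCoeff t lam)
            ((heatTwist n t lam (complexPhaseEquiv n q)).1 - phaseEquiv n p)) := by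
  have hexp := twisted_exponent_eq norm_phaseRotation (heatCoeff_pos ht hlam).ne' lam
    (complexPhaseEquiv n q) (phaseEquiv n p)
  have hquad := dotC_self_add_dotC_self (q.1 - embC p.1, q.2 - embC p.2)
  rw [complexPhaseEquiv_sub_embC] at hquad
  have hcoeff : -(lam / 4) * cothR (t * lam) = -heatCoeff t lam := by rw [heatCoeff, neg_mul]
  rw [pC, hquad, dotC_embC_sub_dotC_embC, hcoeff, mul_assoc, ← exp_add, hexp, gaussianWindow,
    ofReal_exp, ← exp_add, heatFactor, mul_assoc _ (cexp _) (cexp _), ← exp_add, heatGrowth,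
    heatTwist, ofReal_mul (((4 * Real.pi) ^ n)⁻¹)]

theorem HT_eq_shortTimeFourier (ht : 0 < t) (hlam : lam ≠ 0)
    (g : (Fin n → ℝ) × (Fin n → ℝ) → ℂ) (q : (Fin n → ℂ) × (Fin n → ℂ)) :
    HT n t lam g q.1 q.2
      = heatFactor n t lam (complexPhaseEquiv n q)
        * shortTimeFourier (gaussianWindow (heatCoeff t lam)) (g ∘ (phaseEquiv n).symm)
          (heatTwist n t lam (complexPhaseEquiv n q)) := by
  rw [HT, shortTimeFourier, partialFourier, angularFourier,
    ← (measurePreserving_phaseEquiv n).integral_comp', ← integral_const_mul]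
  congr! 2
  rw [mul_assoc, pC_mul_exp_eq ht hlam, Function.comp_apply, MeasurableEquiv.symm_apply_apply,
    smul_eq_mul]
  ring

theorem Wt_eq (ht : 0 < t) (hlam : lam ≠ 0) (q : (Fin n → ℂ) × (Fin n → ℂ)) :
    Wt n t lam q.1 q.2
      = 4 ^ n * (((4 * Real.pi) ^ n)⁻¹ * (lam / Real.sinh (2 * t * lam)) ^ n)
        * Real.exp (-2 * heatGrowth n t lam (complexPhaseEquiv n q)) := by
  set v := complexPhaseEquiv n q
  have hsymp : (∑ j, (q.2 j).re * (q.1 j).im) - ∑ j, (q.2 j).im * (q.1 j).re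
      = -⟪v.1, phaseRotation n v.2⟫ := by
    simp [v, PiLp.inner_apply, mul_comm, sub_eq_add_neg, add_comm]
  have hnorm : (∑ j, (2 * (q.1 j).im) ^ 2) + ∑ j, (2 * (q.2 j).im) ^ 2 = 4 * ‖v.2‖ ^ 2 := by
    rw [EuclideanSpace.real_norm_sq_eq]
    simp only [Fintype.sum_sum_type, v, complexPhaseEquiv_snd_inl, complexPhaseEquiv_snd_inr,
      mul_pow, ← Finset.mul_sum, ← mul_add]
    norm_num
  rw [Wt, pR, hsymp, hnorm, neg_mul, mul_cothR_two_mul ht hlam, mul_right_comm, ← mul_assoc,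
    mul_assoc _ (Real.exp _) (Real.exp _), ← Real.exp_add, heatGrowth]
  ring_nf

/-- The constant left over once the weight has cancelled the growth of the twisted heat
transform. -/
def heatConst (n : ℕ) (t lam : ℝ) : ℝ :=
  (((4 * Real.pi) ^ n)⁻¹ * (lam / Real.sinh (t * lam)) ^ n) ^ 2
    * (4 ^ n * (((4 * Real.pi) ^ n)⁻¹ * (lam / Real.sinh (2 * t * lam)) ^ n))

theorem norm_HT_sq_mul_Wt (ht : 0 < t) (hlam : lam ≠ 0)
    (g : (Fin n → ℝ) × (Fin n → ℝ) → ℂ) (q : (Fin n → ℂ) × (Fin n → ℂ)) :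
    ‖HT n t lam g q.1 q.2‖ ^ 2 * Wt n t lam q.1 q.2
      = heatConst n t lam
        * ‖shortTimeFourier (gaussianWindow (heatCoeff t lam)) (g ∘ (phaseEquiv n).symm)
          (heatTwist n t lam (complexPhaseEquiv n q))‖ ^ 2 := by
  set v := complexPhaseEquiv n q
  have hcancel :
      Real.exp (heatGrowth n t lam v) ^ 2 * Real.exp (-2 * heatGrowth n t lam v) = 1 := by
    rw [← Real.exp_nat_mul, ← Real.exp_add, Nat.cast_two, neg_mul, add_neg_cancel, Real.exp_zero]
  rw [HT_eq_shortTimeFourier ht hlam, norm_mul, norm_heatFactor ht hlam, Wt_eq ht hlam, heatConst]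
  linear_combination (((4 * Real.pi) ^ n)⁻¹ * (lam / Real.sinh (t * lam)) ^ n) ^ 2
    * (4 ^ n * (((4 * Real.pi) ^ n)⁻¹ * (lam / Real.sinh (2 * t * lam)) ^ n))
    * ‖shortTimeFourier (gaussianWindow (heatCoeff t lam)) (g ∘ (phaseEquiv n).symm)
      (heatTwist n t lam v)‖ ^ 2 * hcancel

theorem heatConst_mul_eq_one (n : ℕ) (ht : 0 < t) (hlam : lam ≠ 0) :
    heatConst n t lam * (((lam / Real.sinh (2 * t * lam)) ^ (2 * n))⁻¹
      * ((2 * Real.pi) ^ (2 * n) * (Real.pi / (2 * heatCoeff t lam)) ^ n)) = 1 := by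
  have ha := heatCoeff_pos ht hlam
  have hs := div_sinh_pos (t := 2 * t) (by positivity) hlam
  have hsq := div_sinh_sq ht hlam
  rw [heatConst]
  set a := heatCoeff t lam
  set c := lam / Real.sinh (t * lam)
  set s := lam / Real.sinh (2 * t * lam)
  calc _ = (((4 * Real.pi)⁻¹ ^ 2 * c ^ 2) * (4 * ((4 * Real.pi)⁻¹ * s))
        * ((s ^ 2)⁻¹ * ((2 * Real.pi) ^ 2 * (Real.pi / (2 * a))))) ^ n := by
        simp only [mul_pow, inv_pow, div_pow, ← pow_mul, mul_comm n 2]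
    _ = 1 := by
        rw [hsq]
        convert one_pow n
        field_simp
        norm_num

theorem integral_norm_HT_sq_mul_Wt (ht : 0 < t) (hlam : lam ≠ 0)
    {g : (Fin n → ℝ) × (Fin n → ℝ) → ℂ} (hg : MemLp g 2) :
    ∫ q : (Fin n → ℂ) × (Fin n → ℂ), ‖HT n t lam g q.1 q.2‖ ^ 2 * Wt n t lam q.1 q.2
      = ∫ p, ‖g p‖ ^ 2 := by
  set S := shortTimeFourier (gaussianWindow (heatCoeff t lam)) (g ∘ (phaseEquiv n).symm)
  set κ := lam / Real.sinh (2 * t * lam)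
  have hdim : Module.finrank ℝ (PhaseSpace n) = 2 * n := by simp [two_mul]
  have hwindow := memLp_gaussianWindow (V := PhaseSpace n) (heatCoeff_pos ht hlam)
  have hg' := hg.comp_measurePreserving (measurePreserving_phaseEquiv n).symm
  have hκ₀ : 0 < κ := div_sinh_pos (by positivity) hlam
  have hκ : κ = 2 * heatCoeff t lam - lam / 2 * (lam / (4 * heatCoeff t lam)) :=
    div_sinh_two_mul ht hlam
  have hS : AEStronglyMeasurable (fun v ↦ ‖S v‖ ^ 2) (volume.prod volume) :=
    (aestronglyMeasurable_shortTimeFourier hwindow.1 hg'.1).norm.pow 2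
  have htwist : ∫ v, ‖S (heatTwist n t lam v)‖ ^ 2 = (κ ^ (2 * n))⁻¹ * ∫ v, ‖S v‖ ^ 2 := by
    have := integral_comp_twist volume phaseRotation_phaseRotation (hκ ▸ hκ₀.ne') hS
    rwa [← hκ, hdim, abs_of_pos (by positivity)] at this
  have hSint : ∫ v, ‖S v‖ ^ 2 = (2 * Real.pi) ^ (2 * n)
      * (Real.pi / (2 * heatCoeff t lam)) ^ n * ∫ p, ‖g p‖ ^ 2 := by
    have hexp : ((2 * n : ℕ) : ℝ) / 2 = n := by push_cast; ring
    rw [Measure.volume_eq_prod, integral_norm_sq_shortTimeFourier hwindow hg',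
      integral_norm_gaussianWindow_sq (heatCoeff_pos ht hlam), hdim, hexp, Real.rpow_natCast,
      ← (measurePreserving_phaseEquiv n).symm.integral_comp' (fun p ↦ ‖g p‖ ^ 2), mul_assoc]
    rfl
  calc ∫ q : (Fin n → ℂ) × (Fin n → ℂ), ‖HT n t lam g q.1 q.2‖ ^ 2 * Wt n t lam q.1 q.2
      = heatConst n t lam
        * ∫ q : (Fin n → ℂ) × (Fin n → ℂ), ‖S (heatTwist n t lam (complexPhaseEquiv n q))‖ ^ 2 := by
        simp_rw [norm_HT_sq_mul_Wt ht hlam, integral_const_mul, S]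
    _ = heatConst n t lam * ∫ v, ‖S (heatTwist n t lam v)‖ ^ 2 := by
        rw [← (measurePreserving_complexPhaseEquiv n).integral_comp']
    _ = heatConst n t lam * ((κ ^ (2 * n))⁻¹ * ((2 * Real.pi) ^ (2 * n)
          * (Real.pi / (2 * heatCoeff t lam)) ^ n)) * ∫ p, ‖g p‖ ^ 2 := by
        rw [htwist, hSint]
        ring
    _ = ∫ p, ‖g p‖ ^ 2 := by rw [heatConst_mul_eq_one n ht hlam, one_mul]

end TwistedHeatTransform

section CentralFourier

variable {n : ℕ} {f : (Fin n → ℝ) × (Fin n → ℝ) × ℝ → ℂ}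

theorem partialFT_eq_partialFourier (f : (Fin n → ℝ) × (Fin n → ℝ) × ℝ → ℂ) (lam : ℝ)
    (p : (Fin n → ℝ) × (Fin n → ℝ)) :
    partialFT n f lam p = partialFourier (f ∘ MeasurableEquiv.prodAssoc) (p, lam) := by
  rw [partialFT, partialFourier, angularFourier]
  congr! 4 with ξ
  rw [real_inner_eq_re_inner, RCLike.inner_apply]
  simp [mul_assoc]

theorem ae_integrable_comp_prodAssoc (hf : Integrable f) :
    ∀ᵐ p : (Fin n → ℝ) × (Fin n → ℝ),
      Integrable fun ξ ↦ (f ∘ MeasurableEquiv.prodAssoc) (p, ξ) :=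
  (volume_preserving_prodAssoc.integrable_comp_of_integrable hf).prod_right_ae

theorem ae_memLp_partialFT (hf₁ : Integrable f) (hf₂ : MemLp f 2) :
    ∀ᵐ lam : ℝ, MemLp (partialFT n f lam) 2 := by
  have hF := memLp_partialFourier (ae_integrable_comp_prodAssoc hf₁)
    (hf₂.comp_measurePreserving volume_preserving_prodAssoc)
  filter_upwards [ae_memLp_two_prodMk_left
    (hF.comp_measurePreserving Measure.measurePreserving_swap)] with lam hlam
  rw [funext (partialFT_eq_partialFourier f lam)]
  exact hlam

theorem integral_norm_sq_partialFT (hf₁ : Integrable f) (hf₂ : MemLp f 2) :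
    ∫ lam : ℝ, ∫ p, ‖partialFT n f lam p‖ ^ 2 = 2 * Real.pi * ∫ p, ‖f p‖ ^ 2 := by
  have hf' := hf₂.comp_measurePreserving volume_preserving_prodAssoc
  have hF := memLp_partialFourier (ae_integrable_comp_prodAssoc hf₁) hf'
  simp_rw [partialFT_eq_partialFourier]
  rw [← integral_prod_symm _ ((memLp_two_iff_integrable_sq_norm hF.1).1 hF),
    integral_norm_sq_partialFourier (ae_integrable_comp_prodAssoc hf₁) hf', Module.finrank_self,
    pow_one, ← volume_preserving_prodAssoc.integral_comp']
  rfl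

end CentralFourier

theorem heat_transform_direct_integral_general (n : ℕ) {t : ℝ} (ht : 0 < t)
    {f : (Fin n → ℝ) × (Fin n → ℝ) × ℝ → ℂ} (hf₁ : Integrable f) (hf₂ : MemLp f 2) :
    ∫ p, ‖f p‖ ^ 2
      = (2 * Real.pi)⁻¹ *
        ∫ lam in ({0}ᶜ : Set ℝ),
          ∫ q : (Fin n → ℂ) × (Fin n → ℂ),
            ‖HT n t lam (partialFT n f lam) q.1 q.2‖ ^ 2 * Wt n t lam q.1 q.2 := by
  have hfiber : ∀ᵐ lam : ℝ, ∫ q : (Fin n → ℂ) × (Fin n → ℂ),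
      ‖HT n t lam (partialFT n f lam) q.1 q.2‖ ^ 2 * Wt n t lam q.1 q.2
        = ∫ p, ‖partialFT n f lam p‖ ^ 2 := by
    filter_upwards [ae_memLp_partialFT hf₁ hf₂, Measure.ae_ne volume 0] with lam hmem hlam
    exact integral_norm_HT_sq_mul_Wt ht hlam hmem
  rw [restrict_compl_singleton, integral_congr_ae hfiber, integral_norm_sq_partialFT hf₁ hf₂,
    inv_mul_cancel_left₀ Real.two_pi_pos.ne']

/-- Plancherel-type identity: for every Schwartz function `f` on `ℝ^{2n+1}`,
`∫ |f|² = (2π)⁻¹ ∫_{ℝ∖{0}} ( ∫_{ℂ^{2n}} |H_t^λ(f^λ)(z,w)|² W_t^λ(z,w) dz dw ) dλ`. -/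
theorem heat_transform_direct_integral
    (n : ℕ) (hn : 1 ≤ n) (t : ℝ) (ht : 0 < t)
    (f : SchwartzMap ((Fin n → ℝ) × (Fin n → ℝ) × ℝ) ℂ) :
    ∫ p : (Fin n → ℝ) × (Fin n → ℝ) × ℝ, ‖f p‖ ^ 2
      = (2 * Real.pi)⁻¹ *
        ∫ lam in ({0}ᶜ : Set ℝ),
          ∫ q : (Fin n → ℂ) × (Fin n → ℂ),
            ‖HT n t lam (partialFT n (fun p => f p) lam) q.1 q.2‖ ^ 2 *
              Wt n t lam q.1 q.2 := by
  have : (volume : Measure ((Fin n → ℝ) × ℝ)).IsAddHaarMeasure :=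
    Measure.prod.instIsAddHaarMeasure _ _
  have : (volume : Measure ((Fin n → ℝ) × (Fin n → ℝ) × ℝ)).IsAddHaarMeasure :=
    Measure.prod.instIsAddHaarMeasure _ _
  exact heat_transform_direct_integral_general n ht f.integrable (f.memLp 2)
end
end

section
/- Let n ≥ 1 be an integer and t > 0. For all z, w ∈ ℍ_ℂ, ∫_ℍ k_t^∼(conj(w)^{-1} h) · k_t^∼(h^{-1} z) dh = k_{2t}^∼(conj(w)^{-1} z), where conj(w) denotes componentwise complex conjugation of w ∈ ℂ^n × ℂ^n × ℂ and products and inverses are taken in ℍ_ℂ. (This identity shows that the reproducing kernel of the image of the heat kernel transform ℋ_t is 𝒦^t(z,w) = k_{2t}^∼(conj(w)^{-1} z).) -/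
open MeasureTheory Complex Filter Topology

noncomputable section

/-- Points of the Heisenberg group `ℍ = ℝ^n × ℝ^n × ℝ`. -/
abbrev Hpt (n : ℕ) := (Fin n → ℝ) × (Fin n → ℝ) × ℝ

/-- Points of the complexified Heisenberg group `ℍ_ℂ = ℂ^n × ℂ^n × ℂ`. -/
abbrev HCpt (n : ℕ) := (Fin n → ℂ) × (Fin n → ℂ) × ℂ

/-- Group law on `ℍ_ℂ`:
`(z,w,ζ)(z',w',ζ') = (z+z', w+w', (1/2)(z·w' - w·z') + ζ + ζ')`. -/
def HCmul {n : ℕ} (g g' : HCpt n) : HCpt n :=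
  (g.1 + g'.1, g.2.1 + g'.2.1,
    (1 / 2 : ℂ) * (dotC g.1 g'.2.1 - dotC g.2.1 g'.1) + g.2.2 + g'.2.2)

/-- Inversion on `ℍ_ℂ`: `(z,w,ζ)⁻¹ = (-z,-w,-ζ)`. -/
def HCinv {n : ℕ} (g : HCpt n) : HCpt n := (-g.1, -g.2.1, -g.2.2)

/-- Embedding `ℍ → ℍ_ℂ`. -/
def embH {n : ℕ} (h : Hpt n) : HCpt n := (embC h.1, embC h.2.1, (h.2.2 : ℂ))

/-- The complexified heat kernel on `ℍ_ℂ`: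
`k_t^∼(z,w,ζ) = (2π)^{-1}(4π)^{-n} ∫_ℝ e^{-iλζ} e^{-tλ²} (λ/sinh(λt))^n
  exp(-(λ/4)coth(tλ)(z·z + w·w)) dλ`. -/
def ktC (n : ℕ) (t : ℝ) (g : HCpt n) : ℂ :=
  ((2 * Real.pi)⁻¹ : ℝ) * (((4 * Real.pi) ^ n)⁻¹ : ℝ) *
    ∫ lam : ℝ,
      Complex.exp (-(Complex.I * lam) * g.2.2) * ((Real.exp (-t * lam ^ 2) : ℝ) : ℂ) *
        (((lam / Real.sinh (lam * t)) ^ n : ℝ) : ℂ) *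
        Complex.exp (((-(lam / 4) * cothR (t * lam) : ℝ) : ℂ) *
          (dotC g.1 g.1 + dotC g.2.1 g.2.1))

/-- The heat kernel transform on the Heisenberg group:
`ℋ_t f(g) = ∫_ℍ f(h) k_t^∼(h⁻¹g) dh` for `g ∈ ℍ_ℂ`. -/
def HKT (n : ℕ) (t : ℝ) (f : Hpt n → ℂ) (g : HCpt n) : ℂ :=
  ∫ h : Hpt n, f h * ktC n t (HCmul (HCinv (embH h)) g)

/-- Componentwise complex conjugation on `ℍ_ℂ`. -/
def conjHC {n : ℕ} (g : HCpt n) : HCpt n :=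
  (fun j => (starRingEnd ℂ) (g.1 j), fun j => (starRingEnd ℂ) (g.2.1 j),
    (starRingEnd ℂ) g.2.2)

/-!
The identity is the semigroup law `k_s * k_t = k_{s+t}`, continued to `ℍ_ℂ` in both outer variables.
For a fixed horizontal part `y` of `h`, the two factors are the Fourier transform and the inverse
Fourier transform, in the central coordinate of `h`, of symbols depending on the central frequency
`λ`. Plancherel's theorem in the center trades the central integral for an integral over `λ`. For
each `λ ≠ 0` the remaining integral over `y` is a twisted convolution of two Gaussians, hence again
a Gaussian, and the addition formulas of `sinh` and `coth` identify it with the symbol at time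
`s + t`. The rate `(λ/4) coth (tλ)`, being at least `|λ|/4`, beats the growth of `exp (-iλζ)` in `y`
that complex left or right translation produces, so the symbols have the Gaussian decay in `(y, λ)`
which justifies applying Plancherel and Fubini.
-/

section Plancherel

open scoped FourierTransform SchwartzMap ComplexConjugate

variable {V : Type*} [NormedAddCommGroup V] [InnerProductSpace ℝ V] [FiniteDimensional ℝ V]
  [MeasurableSpace V] [BorelSpace V]

theorem continuous_fourier {F : Type*} [NormedAddCommGroup F] [NormedSpace ℂ F]
    {f : V → F} (hf : Integrable f) : Continuous (𝓕 f) :=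
  VectorFourier.fourierIntegral_continuous Real.continuous_fourierChar continuous_inner hf

theorem integral_fourier_smul {F : Type*} [NormedAddCommGroup F] [NormedSpace ℂ F] [CompleteSpace F]
    {φ : V → ℂ} {f : V → F} (hφ : Integrable φ) (hf : Integrable f) :
    ∫ v, 𝓕 φ v • f v = ∫ v, φ v • 𝓕 f v := by
  have := VectorFourier.integral_fourierIntegral_smul_eq_flip (μ := volume) (ν := volume)
    (L := innerₗ V) Real.continuous_fourierChar continuous_inner hφ hf
  rwa [flip_innerₗ] at this

section Hilbert

variable {F : Type*} [NormedAddCommGroup F] [InnerProductSpace ℂ F] [CompleteSpace F]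

-- Both sides agree as tempered distributions, by self-adjointness of the Fourier integral.
theorem coeFn_fourier_toLp {f : V → F} (hf : Integrable f) (hf2 : MemLp f 2) :
    (𝓕 (hf2.toLp f) : Lp F 2) =ᵐ[volume] 𝓕 f := by
  refine ae_eq_of_integral_contDiff_smul_eq ((Lp.memLp _).locallyIntegrable one_le_two)
    (continuous_fourier hf).locallyIntegrable fun g hg hgs ↦ ?_
  have hgs' : HasCompactSupport (fun v ↦ (g v : ℂ)) := hgs.comp_left Complex.ofReal_zero
  let φ : 𝓢(V, ℂ) := hgs'.toSchwartzMap (Complex.ofRealCLM.contDiff.comp hg)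
  have hφ (u : V → F) : ∫ v, φ v • u v = ∫ v, g v • u v :=
    integral_congr_ae (.of_forall fun v ↦ Complex.coe_smul (g v) (u v))
  have hdist := congrArg (fun T : 𝓢'(V, F) ↦ T φ)
    (Lp.fourier_toTemperedDistribution_eq (hf2.toLp f))
  simp only [TemperedDistribution.fourier_apply, Lp.toTemperedDistribution_apply] at hdist
  calc ∫ v, g v • (𝓕 (hf2.toLp f) : Lp F 2 (volume : Measure V)) v
      = ∫ v, (𝓕 φ) v • (hf2.toLp f : V → F) v := by rw [hdist, hφ]
    _ = ∫ v, (𝓕 φ) v • f v :=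
        integral_congr_ae (hf2.coeFn_toLp.mono fun v hv ↦ congrArg ((𝓕 φ) v • ·) hv)
    _ = ∫ v, φ v • 𝓕 f v := by
        rw [SchwartzMap.fourier_coe, integral_fourier_smul φ.integrable hf]
    _ = ∫ v, g v • 𝓕 f v := hφ _

theorem memLp_two_fourier {f : V → F} (hf : Integrable f) (hf2 : MemLp f 2) :
    MemLp (𝓕 f) 2 :=
  (memLp_congr_ae (coeFn_fourier_toLp hf hf2)).mp (Lp.memLp _)

theorem integral_inner_fourier_fourier {f g : V → F} (hf : Integrable f) (hf2 : MemLp f 2)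
    (hg : Integrable g) (hg2 : MemLp g 2) :
    ∫ v, inner ℂ (𝓕 f v) (𝓕 g v) = ∫ v, inner ℂ (f v) (g v) := by
  have hinner := Lp.inner_fourier_eq (hf2.toLp f) (hg2.toLp g)
  rw [L2.inner_def, L2.inner_def] at hinner
  calc ∫ v, inner ℂ (𝓕 f v) (𝓕 g v)
      = ∫ v, inner ℂ ((𝓕 (hf2.toLp f) : Lp F 2 (volume : Measure V)) v)
          ((𝓕 (hg2.toLp g) : Lp F 2 (volume : Measure V)) v) := by
        refine integral_congr_ae ?_
        filter_upwards [coeFn_fourier_toLp hf hf2, coeFn_fourier_toLp hg hg2] with v hfv hgv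
        rw [hfv, hgv]
    _ = ∫ v, inner ℂ ((hf2.toLp f : V → F) v) ((hg2.toLp g : V → F) v) := hinner
    _ = ∫ v, inner ℂ (f v) (g v) := by
        refine integral_congr_ae ?_
        filter_upwards [hf2.coeFn_toLp, hg2.coeFn_toLp] with v hfv hgv
        rw [hfv, hgv]

theorem integral_norm_sq_fourier {f : V → F} (hf : Integrable f) (hf2 : MemLp f 2) :
    ∫ v, ‖𝓕 f v‖ ^ 2 = ∫ v, ‖f v‖ ^ 2 := by
  apply Complex.ofRealLI.injective
  simpa [← LinearIsometry.integral_comp_comm, inner_self_eq_norm_sq_to_K] using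
    integral_inner_fourier_fourier hf hf2 hf hf2

end Hilbert

theorem ae_memLp_two_of_prod {X Y E : Type*} [MeasurableSpace X] [MeasurableSpace Y]
    {μ : Measure X} {ν : Measure Y} [SFinite μ] [SFinite ν] [NormedAddCommGroup E] {f : X × Y → E}
    (hf : MemLp f 2 (μ.prod ν)) : ∀ᵐ x ∂μ, MemLp (fun y ↦ f (x, y)) 2 ν := by
  filter_upwards [hf.1.prodMk_left, (hf.integrable_norm_pow two_ne_zero).prod_right_ae]
    with x hmeas hint
  exact (memLp_two_iff_integrable_sq_norm hmeas).mpr hint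

theorem aestronglyMeasurable_partialFourier_s19 {F Y : Type*} [NormedAddCommGroup F] [NormedSpace ℂ F]
    [MeasurableSpace Y] {μ : Measure Y} [SFinite μ] {Φ : Y × V → F}
    (hΦ : AEStronglyMeasurable Φ (μ.prod volume)) :
    AEStronglyMeasurable (fun p : Y × V ↦ 𝓕 (fun v ↦ Φ (p.1, v)) p.2) (μ.prod volume) := by
  have hproj : Measure.QuasiMeasurePreserving (fun q : (Y × V) × V ↦ (q.1.1, q.2))
      ((μ.prod volume).prod volume) (μ.prod volume) :=
    QuasiMeasurePreserving.prodMap Measure.quasiMeasurePreserving_fst (.id volume)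
  have hchar : Continuous fun q : V × V ↦ (Real.fourierChar (-inner ℝ q.2 q.1) : ℂ) := by
    fun_prop
  refine AEStronglyMeasurable.integral_prod_right' (f := fun q : (Y × V) × V ↦
    (Real.fourierChar (-inner ℝ q.2 q.1.2) : ℂ) • Φ (q.1.1, q.2)) ?_
  exact (hchar.measurable.comp (by fun_prop : Measurable fun q : (Y × V) × V ↦
    (q.1.2, q.2))).aestronglyMeasurable.smul (hΦ.comp_quasiMeasurePreserving hproj)

theorem memLp_two_partialFourier {F Y : Type*} [NormedAddCommGroup F] [InnerProductSpace ℂ F]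
    [CompleteSpace F] [MeasurableSpace Y] {μ : Measure Y} [SFinite μ] {Φ : Y × V → F}
    (hΦ : MemLp Φ 2 (μ.prod volume)) (hint : ∀ᵐ y ∂μ, Integrable fun v ↦ Φ (y, v)) :
    MemLp (fun p : Y × V ↦ 𝓕 (fun v ↦ Φ (p.1, v)) p.2) 2 (μ.prod volume) := by
  have hmeas := aestronglyMeasurable_partialFourier_s19 hΦ.1
  have hsec := ae_memLp_two_of_prod hΦ
  rw [memLp_two_iff_integrable_sq_norm hmeas, integrable_prod_iff (by fun_prop)]
  constructor
  · filter_upwards [hint, hsec] with y hy hy2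
    exact (memLp_two_fourier hy hy2).integrable_norm_pow two_ne_zero
  · refine (hΦ.integrable_norm_pow two_ne_zero).integral_prod_left.congr ?_
    filter_upwards [hint, hsec] with y hy hy2
    simp only [norm_pow, norm_norm]
    exact (integral_norm_sq_fourier hy hy2).symm

theorem fourierInv_eq_conj_fourier_conj (g : V → ℂ) (v : V) :
    𝓕⁻ g v = conj (𝓕 (fun w ↦ conj (g w)) v) := by
  rw [Real.fourierInv_eq', Real.fourier_eq', ← integral_conj]
  simp [← Complex.exp_conj, Complex.conj_ofNat]

theorem integral_fourier_mul_fourierInv {f g : V → ℂ} (hf : Integrable f) (hf2 : MemLp f 2)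
    (hg : Integrable g) (hg2 : MemLp g 2) :
    ∫ v, 𝓕 f v * 𝓕⁻ g v = ∫ v, f v * g v := by
  simpa [fourierInv_eq_conj_fourier_conj] using
    integral_inner_fourier_fourier (Complex.conjLIE.integrable_comp_iff.mpr hg) hg2.star hf hf2

theorem integral_partialFourier_mul_partialFourierInv {Y : Type*} [MeasurableSpace Y]
    {μ : Measure Y} [SFinite μ] {Φ Ψ : Y × V → ℂ}
    (hΦ : MemLp Φ 2 (μ.prod volume)) (hΦint : ∀ᵐ y ∂μ, Integrable fun v ↦ Φ (y, v))
    (hΨ : MemLp Ψ 2 (μ.prod volume)) (hΨint : ∀ᵐ y ∂μ, Integrable fun v ↦ Ψ (y, v)) :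
    ∫ p : Y × V, 𝓕 (fun v ↦ Φ (p.1, v)) p.2 * 𝓕⁻ (fun v ↦ Ψ (p.1, v)) p.2 ∂(μ.prod volume) =
      ∫ v, ∫ y, Φ (y, v) * Ψ (y, v) ∂μ := by
  have hneg : MeasurePreserving (Prod.map id Neg.neg : Y × V → Y × V)
      (μ.prod volume) (μ.prod volume) :=
    (MeasurePreserving.id μ).prod (Measure.measurePreserving_neg volume)
  have hΨ' : MemLp (fun p : Y × V ↦ 𝓕⁻ (fun v ↦ Ψ (p.1, v)) p.2) 2 (μ.prod volume) := by
    simpa only [Real.fourierInv_eq_fourier_neg] using!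
      (memLp_two_partialFourier hΨ hΨint).comp_measurePreserving hneg
  calc _ = ∫ y, (∫ v, 𝓕 (fun v ↦ Φ (y, v)) v * 𝓕⁻ (fun v ↦ Ψ (y, v)) v) ∂μ :=
        integral_prod _ ((memLp_two_partialFourier hΦ hΦint).integrable_mul hΨ')
    _ = ∫ y, (∫ v, Φ (y, v) * Ψ (y, v)) ∂μ := by
        refine integral_congr_ae ?_
        filter_upwards [hΦint, ae_memLp_two_of_prod hΦ, hΨint, ae_memLp_two_of_prod hΨ]
          with y hΦ1 hΦ2 hΨ1 hΨ2
        exact integral_fourier_mul_fourierInv hΦ1 hΦ2 hΨ1 hΨ2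
    _ = ∫ v, ∫ y, Φ (y, v) * Ψ (y, v) ∂μ := integral_integral_swap (hΦ.integrable_mul hΨ)

end Plancherel

section HeisenbergGroup

variable {n : ℕ}

/-- The horizontal layer `ℝ^n × ℝ^n` of `ℍ`. -/
abbrev HorizontalPt (n : ℕ) := (Fin n → ℝ) × (Fin n → ℝ)

/-- The point `(x, u, 0)` of `ℍ` over `y = (x, u)`, regarded as a point of `ℍ_ℂ`. -/
def horizontal (y : HorizontalPt n) : HCpt n := embH (y.1, y.2, 0)

theorem HCinv_HCmul (g g' : HCpt n) : HCinv (HCmul g g') = HCmul (HCinv g') (HCinv g) := by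
  refine Prod.ext (neg_add_rev _ _) (Prod.ext (neg_add_rev _ _) ?_)
  simp only [HCmul, HCinv, dotC, Pi.neg_apply, neg_mul_neg, mul_comm (g'.1 _), mul_comm (g'.2.1 _)]
  ring

theorem HCinv_HCinv (g : HCpt n) : HCinv (HCinv g) = g := by
  simp [HCinv]

@[fun_prop]
theorem measurable_horizontal : Measurable (horizontal (n := n)) := by
  unfold horizontal embH embC
  fun_prop

@[fun_prop]
theorem measurable_HCmul : Measurable fun p : HCpt n × HCpt n ↦ HCmul p.1 p.2 := by
  unfold HCmul dotC
  fun_prop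

@[fun_prop]
theorem measurable_HCinv : Measurable (HCinv (n := n)) := by
  unfold HCinv
  fun_prop

end HeisenbergGroup

section TwistedGaussian

variable {n : ℕ}

/-- The Gaussian `(z, w, ζ) ↦ exp (-κζ - μ (z·z + w·w))` on `ℍ_ℂ` with central frequency `κ`. -/
def twistedGaussian (κ μ : ℂ) (g : HCpt n) : ℂ :=
  cexp (-(κ * g.2.2) - μ * (dotC g.1 g.1 + dotC g.2.1 g.2.1))

theorem integral_cexp_neg_mul_sum_add_prod {ι : Type*} [Fintype ι] {b : ℂ} (hb : 0 < b.re)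
    (c d : ι → ℂ) :
    ∫ y : (ι → ℝ) × (ι → ℝ), cexp (-b * ∑ i, (y.1 i : ℂ) ^ 2 + ∑ i, c i * y.1 i) *
        cexp (-b * ∑ i, (y.2 i : ℂ) ^ 2 + ∑ i, d i * y.2 i) =
      (Real.pi / b) ^ Fintype.card ι * cexp ((∑ i, c i ^ 2 + ∑ i, d i ^ 2) / (4 * b)) := by
  have hb0 : b ≠ 0 := by rintro rfl; simp at hb
  have hpow : (Real.pi / b : ℂ) ^ (Fintype.card ι / 2 : ℂ) *
      (Real.pi / b) ^ (Fintype.card ι / 2 : ℂ) = (Real.pi / b) ^ Fintype.card ι := by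
    rw [← cpow_add _ _ (div_ne_zero (ofReal_ne_zero.mpr Real.pi_ne_zero) hb0), add_halves,
      cpow_natCast]
  rw [Measure.volume_eq_prod, integral_prod_mul
      (fun x : ι → ℝ ↦ cexp (-b * ∑ i, (x i : ℂ) ^ 2 + ∑ i, c i * x i))
      (fun u : ι → ℝ ↦ cexp (-b * ∑ i, (u i : ℂ) ^ 2 + ∑ i, d i * u i)),
    GaussianFourier.integral_cexp_neg_mul_sum_add hb,
    GaussianFourier.integral_cexp_neg_mul_sum_add hb, mul_mul_mul_comm, hpow,
    ← Complex.exp_add, ← add_div]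

theorem twistedGaussian_mul_horizontal_mul_inv_horizontal_mul (κ μ ν : ℂ) (g g' : HCpt n)
    (y : HorizontalPt n) :
    twistedGaussian κ μ (HCmul g (horizontal y)) *
        twistedGaussian κ ν (HCmul (HCinv (horizontal y)) g') =
      twistedGaussian κ μ g * twistedGaussian κ ν g' *
        (cexp (-(μ + ν) * ∑ i, (y.1 i : ℂ) ^ 2 +
            ∑ i, (κ / 2 * (g.2.1 i + g'.2.1 i) - 2 * μ * g.1 i + 2 * ν * g'.1 i) * y.1 i) *
          cexp (-(μ + ν) * ∑ i, (y.2 i : ℂ) ^ 2 +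
            ∑ i, (-(κ / 2 * (g.1 i + g'.1 i)) - 2 * μ * g.2.1 i + 2 * ν * g'.2.1 i) * y.2 i)) := by
  have hcoord (a b p q x u : ℂ) :
      -(κ * (1 / 2 * (a * u - b * x))) - μ * ((a + x) * (a + x) + (b + u) * (b + u)) +
          (-(κ * (1 / 2 * (-x * q - -u * p))) -
            ν * ((-x + p) * (-x + p) + (-u + q) * (-u + q))) =
        -(μ * (a * a + b * b)) - ν * (p * p + q * q) +
          (-(μ + ν) * x ^ 2 + (κ / 2 * (b + q) - 2 * μ * a + 2 * ν * p) * x +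
            (-(μ + ν) * u ^ 2 + (-(κ / 2 * (a + p)) - 2 * μ * b + 2 * ν * q) * u)) := by
    ring
  have hsum := Finset.sum_congr (rfl : (Finset.univ : Finset (Fin n)) = _) fun j _ ↦
    hcoord (g.1 j) (g.2.1 j) (g'.1 j) (g'.2.1 j) (y.1 j) (y.2 j)
  simp only [Finset.sum_add_distrib, Finset.sum_sub_distrib, Finset.sum_neg_distrib,
    ← Finset.mul_sum] at hsum
  simp only [twistedGaussian, HCmul, HCinv, horizontal, embH, dotC, embC, ← Complex.exp_add,
    Pi.add_apply, Pi.neg_apply, ofReal_zero, neg_zero]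
  congr 1
  linear_combination hsum

theorem integral_twistedGaussian_mul_twistedGaussian {κ μ ν : ℂ} (h : 0 < (μ + ν).re)
    (g g' : HCpt n) :
    ∫ y, twistedGaussian κ μ (HCmul g (horizontal y)) *
        twistedGaussian κ ν (HCmul (HCinv (horizontal y)) g') =
      (Real.pi / (μ + ν)) ^ n *
        twistedGaussian κ ((μ * ν - κ ^ 2 / 16) / (μ + ν)) (HCmul g g') := by
  have h0 : μ + ν ≠ 0 := fun h0 ↦ by simp [h0] at h
  simp_rw [twistedGaussian_mul_horizontal_mul_inv_horizontal_mul]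
  rw [integral_const_mul, integral_cexp_neg_mul_sum_add_prod h, Fintype.card_fin, mul_left_comm]
  congr 1
  simp only [twistedGaussian, HCmul, dotC, ← Complex.exp_add, Pi.add_apply]
  congr 1
  have hcoord (a b p q : ℂ) :
      -(μ * (a * a + b * b)) - ν * (p * p + q * q) +
          ((κ / 2 * (b + q) - 2 * μ * a + 2 * ν * p) ^ 2 +
            (-(κ / 2 * (a + p)) - 2 * μ * b + 2 * ν * q) ^ 2) / (4 * (μ + ν)) =
        -(κ * (1 / 2 * (a * q - b * p))) -
          (μ * ν - κ ^ 2 / 16) / (μ + ν) * ((a + p) * (a + p) + (b + q) * (b + q)) := by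
    field_simp
    ring
  have hsum := Finset.sum_congr (rfl : (Finset.univ : Finset (Fin n)) = _) fun j _ ↦
    hcoord (g.1 j) (g.2.1 j) (g'.1 j) (g'.2.1 j)
  simp only [Finset.sum_add_distrib, Finset.sum_sub_distrib, Finset.sum_neg_distrib,
    ← Finset.mul_sum, ← Finset.sum_div] at hsum
  linear_combination hsum

end TwistedGaussian

section CothBounds

theorem abs_mul_cothR_abs (x : ℝ) : |x| * cothR |x| = x * cothR x := by
  rcases abs_choice x with hx | hx <;> simp [hx, cothR, div_neg]

theorem sinh_le_mul_cosh {x : ℝ} (hx : 0 ≤ x) : Real.sinh x ≤ x * Real.cosh x := by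
  have hderiv (y : ℝ) : HasDerivAt (fun y ↦ y * Real.cosh y - Real.sinh y) (y * Real.sinh y) y := by
    convert! ((hasDerivAt_id y).mul (Real.hasDerivAt_cosh y)).sub (Real.hasDerivAt_sinh y) using 1
    simp
  have hmono : MonotoneOn (fun y ↦ y * Real.cosh y - Real.sinh y) (Set.Ici 0) := by
    refine monotoneOn_of_hasDerivWithinAt_nonneg (convex_Ici 0) (by fun_prop)
      (fun y _ ↦ (hderiv y).hasDerivWithinAt) fun y hy ↦ ?_
    rw [interior_Ici] at hy
    exact mul_nonneg hy.le (Real.sinh_nonneg_iff.mpr hy.le)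
  simpa using hmono Set.self_mem_Ici hx hx

theorem abs_le_mul_cothR {x : ℝ} (hx : x ≠ 0) : |x| ≤ x * cothR x := by
  have hpos := abs_pos.mpr hx
  rw [← abs_mul_cothR_abs]
  exact le_mul_of_one_le_right hpos.le
    ((one_le_div (Real.sinh_pos_iff.mpr hpos)).mpr (Real.sinh_lt_cosh _).le)

theorem one_le_mul_cothR {x : ℝ} (hx : x ≠ 0) : 1 ≤ x * cothR x := by
  have hpos := abs_pos.mpr hx
  rw [← abs_mul_cothR_abs, cothR, ← mul_div_assoc, one_le_div (Real.sinh_pos_iff.mpr hpos)]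
  exact sinh_le_mul_cosh hpos.le

theorem mul_cothR_le_abs_add_one {x : ℝ} (hx : x ≠ 0) : x * cothR x ≤ |x| + 1 := by
  have hpos := abs_pos.mpr hx
  have hexp : Real.cosh |x| - Real.sinh |x| ≤ 1 := by
    rw [Real.cosh_sub_sinh]
    exact Real.exp_le_one_iff.mpr (neg_nonpos.mpr hpos.le)
  rw [← abs_mul_cothR_abs, cothR, ← mul_div_assoc, div_le_iff₀ (Real.sinh_pos_iff.mpr hpos)]
  calc |x| * Real.cosh |x| ≤ |x| * (Real.sinh |x| + 1) := by gcongr; linarith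
    _ = |x| * Real.sinh |x| + |x| := by ring
    _ ≤ |x| * Real.sinh |x| + Real.sinh |x| := by gcongr; exact Real.self_le_sinh_iff.mpr hpos.le
    _ = (|x| + 1) * Real.sinh |x| := by ring

theorem abs_div_sinh_le_one (x : ℝ) : |x / Real.sinh x| ≤ 1 := by
  rw [abs_div, Real.abs_sinh]
  exact div_le_one_of_le₀ (Real.self_le_sinh_iff.mpr (abs_nonneg x))
    (Real.sinh_nonneg_iff.mpr (abs_nonneg x))

end CothBounds

section HeatSymbol

open scoped FourierTransform

variable {n : ℕ}

/-- The Gaussian rate `(λ/4) coth (tλ)` of the heat kernel at time `t` and central frequency `λ`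
(Mehler's formula). -/
def mehlerRate (t lam : ℝ) : ℝ := lam / 4 * cothR (t * lam)

/-- The amplitude `e^{-tλ²} (λ / (4π sinh(λt)))^n` of the heat kernel at central frequency `λ`. -/
def heatAmplitude (n : ℕ) (t lam : ℝ) : ℝ :=
  Real.exp (-t * lam ^ 2) * (lam / (4 * Real.pi * Real.sinh (lam * t))) ^ n

/-- The component of `k_t^∼` at central frequency `λ`, normalized so that `k_t^∼ (g)` is the
integral over `ν` of the components at `λ = 2πν`. -/
def heatSymbol (n : ℕ) (t : ℝ) (g : HCpt n) (lam : ℝ) : ℂ :=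
  heatAmplitude n t lam * twistedGaussian (I * lam) (mehlerRate t lam) g

theorem mehlerRate_eq_mul_cothR_div {t : ℝ} (ht : 0 < t) (lam : ℝ) :
    mehlerRate t lam = t * lam * cothR (t * lam) / (4 * t) := by
  rw [mehlerRate]
  field_simp

theorem abs_div_four_le_mehlerRate {t lam : ℝ} (ht : 0 < t) (hlam : lam ≠ 0) :
    |lam| / 4 ≤ mehlerRate t lam := by
  rw [mehlerRate_eq_mul_cothR_div ht, le_div_iff₀ (by positivity)]
  calc |lam| / 4 * (4 * t) = |t * lam| := by rw [abs_mul, abs_of_pos ht]; ring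
    _ ≤ t * lam * cothR (t * lam) := abs_le_mul_cothR (mul_ne_zero ht.ne' hlam)

theorem one_div_le_mehlerRate {t lam : ℝ} (ht : 0 < t) (hlam : lam ≠ 0) :
    1 / (4 * t) ≤ mehlerRate t lam := by
  rw [mehlerRate_eq_mul_cothR_div ht]
  gcongr
  exact one_le_mul_cothR (mul_ne_zero ht.ne' hlam)

theorem mehlerRate_le_abs_div_four_add {t lam : ℝ} (ht : 0 < t) (hlam : lam ≠ 0) :
    mehlerRate t lam ≤ |lam| / 4 + 1 / (4 * t) := by
  rw [mehlerRate_eq_mul_cothR_div ht]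
  calc t * lam * cothR (t * lam) / (4 * t) ≤ (|t * lam| + 1) / (4 * t) := by
        gcongr
        exact mul_cothR_le_abs_add_one (mul_ne_zero ht.ne' hlam)
    _ = |lam| / 4 + 1 / (4 * t) := by rw [abs_mul, abs_of_pos ht]; field_simp

theorem mehlerRate_pos {t lam : ℝ} (ht : 0 < t) (hlam : lam ≠ 0) : 0 < mehlerRate t lam :=
  lt_of_lt_of_le (by positivity) (one_div_le_mehlerRate ht hlam)

theorem ktC_eq_integral_heatSymbol (t : ℝ) (g : HCpt n) :
    ktC n t g = ∫ ν : ℝ, heatSymbol n t g (2 * Real.pi * ν) := by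
  rw [Measure.integral_comp_mul_left (heatSymbol n t g), abs_of_pos (by positivity), ktC, mul_assoc,
    ← integral_const_mul, real_smul]
  congr 2 with lam
  simp only [heatSymbol, heatAmplitude, twistedGaussian, mehlerRate, sub_eq_add_neg,
    Complex.exp_add, mul_comm (4 * Real.pi), ← div_div, div_pow]
  push_cast
  ring_nf

theorem cothR_add_cothR {a b : ℝ} (ha : a ≠ 0) (hb : b ≠ 0) :
    cothR a + cothR b = Real.sinh (a + b) / (Real.sinh a * Real.sinh b) := by
  have ha' := Real.sinh_ne_zero.mpr ha
  have hb' := Real.sinh_ne_zero.mpr hb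
  rw [cothR, cothR, Real.sinh_add]
  field_simp
  ring

theorem cothR_add {a b : ℝ} (ha : a ≠ 0) (hb : b ≠ 0) (hab : a + b ≠ 0) :
    cothR (a + b) = (cothR a * cothR b + 1) / (cothR a + cothR b) := by
  have ha' := Real.sinh_ne_zero.mpr ha
  have hb' := Real.sinh_ne_zero.mpr hb
  have hab' := Real.sinh_ne_zero.mpr hab
  rw [cothR_add_cothR ha hb, cothR, cothR, cothR, Real.cosh_add]
  field_simp

theorem mehlerRate_add {s t lam : ℝ} (hs : 0 < s) (ht : 0 < t) (hlam : lam ≠ 0) :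
    mehlerRate (s + t) lam = (mehlerRate s lam * mehlerRate t lam + lam ^ 2 / 16) /
      (mehlerRate s lam + mehlerRate t lam) := by
  have hadd := cothR_add (mul_ne_zero hs.ne' hlam) (mul_ne_zero ht.ne' hlam)
    (by rw [← add_mul]; exact mul_ne_zero (by positivity) hlam)
  rw [mehlerRate, add_mul, hadd, mehlerRate, mehlerRate]
  field_simp
  ring

theorem heatAmplitude_mul_heatAmplitude {s t lam : ℝ} (hs : 0 < s) (ht : 0 < t) (hlam : lam ≠ 0) :
    heatAmplitude n s lam * heatAmplitude n t lam *
        (Real.pi / (mehlerRate s lam + mehlerRate t lam)) ^ n =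
      heatAmplitude n (s + t) lam := by
  have hs' := Real.sinh_ne_zero.mpr (mul_ne_zero hlam hs.ne')
  have ht' := Real.sinh_ne_zero.mpr (mul_ne_zero hlam ht.ne')
  have hrate : mehlerRate s lam + mehlerRate t lam =
      lam / 4 * (Real.sinh (lam * (s + t)) / (Real.sinh (lam * s) * Real.sinh (lam * t))) := by
    rw [mul_add lam, ← cothR_add_cothR (mul_ne_zero hlam hs.ne') (mul_ne_zero hlam ht.ne'),
      mehlerRate, mehlerRate, mul_comm s, mul_comm t, mul_add]
  have hbase : lam / (4 * Real.pi * Real.sinh (lam * s)) *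
      (lam / (4 * Real.pi * Real.sinh (lam * t))) *
        (Real.pi / (mehlerRate s lam + mehlerRate t lam)) =
      lam / (4 * Real.pi * Real.sinh (lam * (s + t))) := by
    rw [hrate]
    field_simp
  rw [heatAmplitude, heatAmplitude, heatAmplitude, ← hbase, mul_pow, mul_pow, neg_add, add_mul,
    Real.exp_add]
  ring

theorem integral_heatSymbol_mul_heatSymbol {s t lam : ℝ} (hs : 0 < s) (ht : 0 < t)
    (hlam : lam ≠ 0) (g g' : HCpt n) :
    ∫ y, heatSymbol n s (HCmul g (horizontal y)) lam *
        heatSymbol n t (HCmul (HCinv (horizontal y)) g') lam =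
      heatSymbol n (s + t) (HCmul g g') lam := by
  have hre : 0 < ((mehlerRate s lam : ℂ) + mehlerRate t lam).re := by
    simpa using add_pos (mehlerRate_pos hs hlam) (mehlerRate_pos ht hlam)
  simp_rw [heatSymbol, mul_mul_mul_comm]
  rw [integral_const_mul, integral_twistedGaussian_mul_twistedGaussian hre,
    ← heatAmplitude_mul_heatAmplitude hs ht hlam, mehlerRate_add hs ht hlam]
  push_cast [mul_pow, I_sq]
  ring_nf

theorem heatSymbol_mul_embH (t lam : ℝ) (g : HCpt n) (h : Hpt n) :
    heatSymbol n t (HCmul g (embH h)) lam =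
      cexp (-(I * lam * h.2.2)) * heatSymbol n t (HCmul g (horizontal (h.1, h.2.1))) lam := by
  simp only [heatSymbol, twistedGaussian, HCmul, horizontal, embH, mul_left_comm (cexp _),
    ← Complex.exp_add]
  congr 2
  push_cast
  ring

theorem heatSymbol_inv_embH_mul (t lam : ℝ) (g : HCpt n) (h : Hpt n) :
    heatSymbol n t (HCmul (HCinv (embH h)) g) lam =
      cexp (I * lam * h.2.2) *
        heatSymbol n t (HCmul (HCinv (horizontal (h.1, h.2.1))) g) lam := by
  simp only [heatSymbol, twistedGaussian, HCmul, HCinv, horizontal, embH, mul_left_comm (cexp _),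
    ← Complex.exp_add]
  congr 2
  push_cast
  ring

theorem heatSymbol_inv (t : ℝ) (g : HCpt n) (lam : ℝ) :
    heatSymbol n t (HCinv g) lam = heatSymbol n t g (-lam) := by
  simp [heatSymbol, heatAmplitude, mehlerRate, twistedGaussian, HCinv, dotC, cothR, div_neg,
    neg_div, sub_eq_add_neg]

@[fun_prop]
theorem measurable_heatSymbol (n : ℕ) (t : ℝ) :
    Measurable fun p : HCpt n × ℝ ↦ heatSymbol n t p.1 p.2 := by
  unfold heatSymbol heatAmplitude twistedGaussian mehlerRate cothR dotC
  have := Real.measurable_sinh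
  have := Real.measurable_cosh
  fun_prop

theorem ktC_mul_embH_eq_fourier (t : ℝ) (g : HCpt n) (h : Hpt n) :
    ktC n t (HCmul g (embH h)) =
      𝓕 (fun ν : ℝ ↦ heatSymbol n t (HCmul g (horizontal (h.1, h.2.1))) (2 * Real.pi * ν))
        h.2.2 := by
  rw [ktC_eq_integral_heatSymbol, Real.fourier_real_eq_integral_exp_smul]
  congr 1 with ν
  rw [heatSymbol_mul_embH, smul_eq_mul]
  congr 2
  push_cast
  ring

theorem ktC_inv_embH_mul_eq_fourierInv (t : ℝ) (g : HCpt n) (h : Hpt n) :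
    ktC n t (HCmul (HCinv (embH h)) g) =
      𝓕⁻ (fun ν : ℝ ↦
        heatSymbol n t (HCmul (HCinv (horizontal (h.1, h.2.1))) g) (2 * Real.pi * ν)) h.2.2 := by
  rw [ktC_eq_integral_heatSymbol, Real.fourierInv_eq']
  congr 1 with ν
  rw [heatSymbol_inv_embH_mul, smul_eq_mul]
  congr 2
  simp only [RCLike.inner_apply, conj_trivial]
  push_cast
  ring

end HeatSymbol

section GaussianDecay

variable {n : ℕ}

/-- The squared Euclidean norm `|x|² + |u|²` of a pair `(x, u)` (the norm of the product type is
the sup norm). -/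
def euclideanNormSq (y : HorizontalPt n) : ℝ := ∑ i, y.1 i ^ 2 + ∑ i, y.2 i ^ 2

/-- Domination of `Φ (y, ν)` by a Gaussian in `(y, ν)`. The null set `ν = 0` is excluded because
`λ / sinh λ` and `coth λ` have junk values at `λ = 0`. -/
def HasGaussianDecay (Φ : HorizontalPt n × ℝ → ℂ) : Prop :=
  ∃ C a b : ℝ, 0 < a ∧ 0 < b ∧ ∀ y, ∀ ν ≠ 0,
    ‖Φ (y, ν)‖ ≤ C * (Real.exp (-a * euclideanNormSq y) * Real.exp (-b * ν ^ 2))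

theorem euclideanNormSq_nonneg (y : HorizontalPt n) : 0 ≤ euclideanNormSq y := by
  unfold euclideanNormSq
  positivity

@[fun_prop]
theorem continuous_euclideanNormSq : Continuous (euclideanNormSq (n := n)) := by
  unfold euclideanNormSq
  fun_prop

theorem integrable_exp_neg_mul_sum_sq {ι : Type*} [Fintype ι] {a : ℝ} (ha : 0 < a) :
    Integrable fun x : ι → ℝ ↦ Real.exp (-a * ∑ i, x i ^ 2) := by
  simp_rw [Finset.mul_sum, Real.exp_sum]
  exact Integrable.fintype_prod fun _ ↦ integrable_exp_neg_mul_sq ha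

theorem integrable_exp_neg_mul_euclideanNormSq {a : ℝ} (ha : 0 < a) :
    Integrable fun y : HorizontalPt n ↦ Real.exp (-a * euclideanNormSq y) := by
  simp_rw [euclideanNormSq, mul_add, Real.exp_add]
  exact (integrable_exp_neg_mul_sum_sq ha).mul_prod (integrable_exp_neg_mul_sum_sq ha)

theorem memLp_two_exp_neg_mul_euclideanNormSq_mul {a b : ℝ} (ha : 0 < a) (hb : 0 < b) :
    MemLp (fun p : HorizontalPt n × ℝ ↦
      Real.exp (-a * euclideanNormSq p.1) * Real.exp (-b * p.2 ^ 2)) 2 := by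
  rw [memLp_two_iff_integrable_sq (by fun_prop)]
  refine ((integrable_exp_neg_mul_euclideanNormSq (mul_pos two_pos ha)).mul_prod
    (integrable_exp_neg_mul_sq (mul_pos two_pos hb))).congr (.of_forall fun p ↦ ?_)
  simp only [mul_pow, ← Real.exp_nat_mul]
  ring_nf

namespace HasGaussianDecay

variable {Φ : HorizontalPt n × ℝ → ℂ}

theorem memLp_two (hΦ : HasGaussianDecay Φ) (hmeas : AEStronglyMeasurable Φ) : MemLp Φ 2 := by
  obtain ⟨C, a, b, ha, hb, hbound⟩ := hΦ
  refine ((memLp_two_exp_neg_mul_euclideanNormSq_mul ha hb).const_mul C).mono' hmeas ?_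
  filter_upwards [Measure.quasiMeasurePreserving_snd.ae (Measure.ae_ne volume 0)] with p hp
  exact hbound p.1 p.2 hp

theorem ae_integrable_right (hΦ : HasGaussianDecay Φ) (hmeas : AEStronglyMeasurable Φ) :
    ∀ᵐ y, Integrable fun ν ↦ Φ (y, ν) := by
  obtain ⟨C, a, b, -, hb, hbound⟩ := hΦ
  filter_upwards [hmeas.prodMk_left] with y hy
  refine (((integrable_exp_neg_mul_sq hb).const_mul
    (Real.exp (-a * euclideanNormSq y))).const_mul C).mono' hy ?_
  filter_upwards [Measure.ae_ne volume 0] with ν hν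
  exact hbound y ν hν

theorem neg_right (hΦ : HasGaussianDecay Φ) : HasGaussianDecay fun p ↦ Φ (p.1, -p.2) := by
  obtain ⟨C, a, b, ha, hb, hbound⟩ := hΦ
  exact ⟨C, a, b, ha, hb, fun y ν hν ↦ by simpa using hbound y (-ν) (neg_ne_zero.mpr hν)⟩

end HasGaussianDecay

theorem abs_im_dotC_embC_le (a : Fin n → ℂ) (x : Fin n → ℝ) :
    |(dotC a (embC x)).im| ≤ 2 * ((∑ i, x i ^ 2) / 16 + ∑ i, ‖a i‖ ^ 2) := by
  rw [dotC, im_sum, Finset.sum_div, ← Finset.sum_add_distrib, Finset.mul_sum]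
  refine (Finset.abs_sum_le_sum_abs _ _).trans (Finset.sum_le_sum fun i _ ↦ ?_)
  calc |(a i * embC x i).im| ≤ ‖a i‖ * |x i| := by
        simpa [embC] using abs_im_le_norm (a i * x i)
    _ ≤ 2 * (x i ^ 2 / 16 + ‖a i‖ ^ 2) := by
        nlinarith [sq_nonneg (|x i| / 4 - ‖a i‖), sq_abs (x i)]

theorem abs_im_mul_horizontal_le (g : HCpt n) (y : HorizontalPt n) :
    |(HCmul g (horizontal y)).2.2.im| ≤
      euclideanNormSq y / 16 + (∑ i, ‖g.1 i‖ ^ 2 + ∑ i, ‖g.2.1 i‖ ^ 2 + |g.2.2.im|) := by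
  have hzu := abs_im_dotC_embC_le g.1 y.2
  have hwx := abs_im_dotC_embC_le g.2.1 y.1
  have him : (HCmul g (horizontal y)).2.2.im =
      ((dotC g.1 (embC y.2)).im - (dotC g.2.1 (embC y.1)).im) / 2 + g.2.2.im := by
    simp [HCmul, horizontal, embH, div_eq_inv_mul]
  calc |(HCmul g (horizontal y)).2.2.im|
      ≤ (|(dotC g.1 (embC y.2)).im| + |(dotC g.2.1 (embC y.1)).im|) / 2 + |g.2.2.im| := by
        rw [him]
        refine (abs_add_le _ _).trans ?_
        rw [abs_div, abs_two]
        gcongr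
        exact abs_sub _ _
    _ ≤ _ := by
        rw [euclideanNormSq]
        linarith

theorem half_sum_sq_sub_le_re_dotC (a : Fin n → ℂ) (x : Fin n → ℝ) :
    (∑ i, x i ^ 2) / 2 - ∑ i, ‖a i‖ ^ 2 ≤ (dotC (a + embC x) (a + embC x)).re := by
  rw [dotC, re_sum, Finset.sum_div, ← Finset.sum_sub_distrib]
  refine Finset.sum_le_sum fun i _ ↦ ?_
  have hre : ((a + embC x) i * (a + embC x) i).re =
      ((a i).re + x i) ^ 2 - (a i).im ^ 2 := by
    simp [embC, sq]
  rw [hre, ← normSq_eq_norm_sq, normSq_apply]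
  nlinarith [sq_nonneg (x i + 2 * (a i).re)]

theorem half_euclideanNormSq_sub_le_re (g : HCpt n) (y : HorizontalPt n) :
    euclideanNormSq y / 2 - (∑ i, ‖g.1 i‖ ^ 2 + ∑ i, ‖g.2.1 i‖ ^ 2) ≤
      (dotC (HCmul g (horizontal y)).1 (HCmul g (horizontal y)).1 +
        dotC (HCmul g (horizontal y)).2.1 (HCmul g (horizontal y)).2.1).re := by
  have hz := half_sum_sq_sub_le_re_dotC g.1 y.1
  have hw := half_sum_sq_sub_le_re_dotC g.2.1 y.2
  rw [add_re, euclideanNormSq]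
  simp only [HCmul, horizontal, embH]
  linarith

theorem norm_twistedGaussian_I_mul (lam m : ℝ) (g : HCpt n) :
    ‖twistedGaussian (I * lam) m g‖ =
      Real.exp (lam * g.2.2.im - m * (dotC g.1 g.1 + dotC g.2.1 g.2.1).re) := by
  rw [twistedGaussian, norm_exp]
  congr 1
  simp

theorem abs_heatAmplitude_le {t : ℝ} (ht : 0 < t) (lam : ℝ) :
    |heatAmplitude n t lam| ≤ (1 / (4 * Real.pi * t)) ^ n * Real.exp (-t * lam ^ 2) := by
  have hbase : lam / (4 * Real.pi * Real.sinh (lam * t)) =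
      lam * t / Real.sinh (lam * t) * (1 / (4 * Real.pi * t)) := by
    field_simp
  rw [heatAmplitude, abs_mul, Real.abs_exp, abs_pow, hbase, abs_mul, mul_comm,
    abs_of_pos (by positivity : 0 < 1 / (4 * Real.pi * t))]
  gcongr
  exact mul_le_of_le_one_left (by positivity) (abs_div_sinh_le_one _)

-- The growth `|λ| P / 16` from the center is at most half of the Gaussian decay `m P / 2`.
theorem heat_exponent_le {t lam m P D K W R : ℝ} (ht : 0 < t) (hP : 0 ≤ P) (hK : 0 ≤ K)
    (hm : |lam| / 4 ≤ m) (hm' : 1 / (4 * t) ≤ m) (hm'' : m ≤ |lam| / 4 + 1 / (4 * t))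
    (hW : |W| ≤ P / 16 + D) (hR : P / 2 - K ≤ R) :
    -t * lam ^ 2 + (lam * W - m * R) ≤
      ((D + K / 4) ^ 2 / (2 * t) + K / (4 * t)) +
        (-(1 / (16 * t)) * P + -(t / 2) * lam ^ 2) := by
  have hm0 : 0 ≤ m := (by positivity : 0 ≤ |lam| / 4).trans hm
  have hcentral : lam * W ≤ |lam| * (P / 16 + D) :=
    (le_abs_self _).trans (by rw [abs_mul]; gcongr)
  have habsorb : |lam| / 4 * (P / 4) ≤ m * (P / 4) := by gcongr
  have hquad : m * (P / 2 - K) ≤ m * R := by gcongr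
  have hconst : m * K ≤ (|lam| / 4 + 1 / (4 * t)) * K := by gcongr
  have hdecay : 1 / (4 * t) * P ≤ m * P := by gcongr
  have hyoung : |lam| * (D + K / 4) ≤ t / 2 * lam ^ 2 + (D + K / 4) ^ 2 / (2 * t) := by
    rw [← sub_nonneg, ← sq_abs lam]
    have hsq : t / 2 * |lam| ^ 2 + (D + K / 4) ^ 2 / (2 * t) - |lam| * (D + K / 4) =
        (t * |lam| - (D + K / 4)) ^ 2 / (2 * t) := by
      field_simp
      ring
    rw [hsq]
    positivity
  have hP16 : 1 / (16 * t) * P = 1 / (4 * t) * P / 4 := by ring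
  have hK4 : K / (4 * t) = 1 / (4 * t) * K := by ring
  linarith

theorem exists_norm_heatSymbol_mul_horizontal_le {t : ℝ} (ht : 0 < t) (g : HCpt n) :
    ∃ C : ℝ, ∀ y, ∀ lam ≠ 0, ‖heatSymbol n t (HCmul g (horizontal y)) lam‖ ≤
      C * (Real.exp (-(1 / (16 * t)) * euclideanNormSq y) * Real.exp (-(t / 2) * lam ^ 2)) := by
  set K := ∑ i, ‖g.1 i‖ ^ 2 + ∑ i, ‖g.2.1 i‖ ^ 2 with hK
  set D := K + |g.2.2.im|
  refine ⟨(1 / (4 * Real.pi * t)) ^ n *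
    Real.exp ((D + K / 4) ^ 2 / (2 * t) + K / (4 * t)), fun y lam hlam ↦ ?_⟩
  have hexp := heat_exponent_le ht (euclideanNormSq_nonneg y) (hK ▸ by positivity : 0 ≤ K)
    (abs_div_four_le_mehlerRate ht hlam) (one_div_le_mehlerRate ht hlam)
    (mehlerRate_le_abs_div_four_add ht hlam) (abs_im_mul_horizontal_le g y)
    (half_euclideanNormSq_sub_le_re g y)
  rw [heatSymbol, norm_mul, norm_real, Real.norm_eq_abs, norm_twistedGaussian_I_mul]
  set E := lam * _ - mehlerRate t lam * _
  calc |heatAmplitude n t lam| * Real.exp E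
      ≤ (1 / (4 * Real.pi * t)) ^ n * Real.exp (-t * lam ^ 2) * Real.exp E := by
        gcongr
        exact abs_heatAmplitude_le ht lam
    _ = (1 / (4 * Real.pi * t)) ^ n * Real.exp (-t * lam ^ 2 + E) := by
        rw [mul_assoc, ← Real.exp_add]
    _ ≤ (1 / (4 * Real.pi * t)) ^ n * Real.exp ((D + K / 4) ^ 2 / (2 * t) + K / (4 * t) +
          (-(1 / (16 * t)) * euclideanNormSq y + -(t / 2) * lam ^ 2)) := by gcongr
    _ = _ := by rw [Real.exp_add _ (_ + _), Real.exp_add (_ * _), ← mul_assoc]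

theorem hasGaussianDecay_heatSymbol_mul_horizontal {t : ℝ} (ht : 0 < t) (g : HCpt n) :
    HasGaussianDecay fun p : HorizontalPt n × ℝ ↦
      heatSymbol n t (HCmul g (horizontal p.1)) (2 * Real.pi * p.2) := by
  obtain ⟨C, hC⟩ := exists_norm_heatSymbol_mul_horizontal_le ht g
  refine ⟨C, 1 / (16 * t), 2 * Real.pi ^ 2 * t, by positivity, by positivity, fun y ν hν ↦ ?_⟩
  convert! hC y (2 * Real.pi * ν) (mul_ne_zero (by positivity) hν) using 4
  ring

theorem hasGaussianDecay_heatSymbol_inv_horizontal_mul {t : ℝ} (ht : 0 < t) (g : HCpt n) :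
    HasGaussianDecay fun p : HorizontalPt n × ℝ ↦
      heatSymbol n t (HCmul (HCinv (horizontal p.1)) g) (2 * Real.pi * p.2) := by
  convert! (hasGaussianDecay_heatSymbol_mul_horizontal ht (HCinv g)).neg_right using 2 with p
  rw [mul_neg, ← heatSymbol_inv, HCinv_HCmul, HCinv_HCinv]

end GaussianDecay

theorem reproducing_kernel_identity_general {n : ℕ} {s t : ℝ} (hs : 0 < s) (ht : 0 < t)
    (g g' : HCpt n) :
    ∫ h : Hpt n, ktC n s (HCmul g (embH h)) * ktC n t (HCmul (HCinv (embH h)) g') =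
      ktC n (s + t) (HCmul g g') := by
  have hleft := hasGaussianDecay_heatSymbol_mul_horizontal hs g
  have hright := hasGaussianDecay_heatSymbol_inv_horizontal_mul ht g'
  have hleft_meas : AEStronglyMeasurable fun p : HorizontalPt n × ℝ ↦
      heatSymbol n s (HCmul g (horizontal p.1)) (2 * Real.pi * p.2) :=
    Measurable.aestronglyMeasurable (by fun_prop)
  have hright_meas : AEStronglyMeasurable fun p : HorizontalPt n × ℝ ↦
      heatSymbol n t (HCmul (HCinv (horizontal p.1)) g') (2 * Real.pi * p.2) :=
    Measurable.aestronglyMeasurable (by fun_prop)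
  have hae : ∀ᵐ ν : ℝ, 2 * Real.pi * ν ≠ 0 := by
    filter_upwards [Measure.ae_ne volume 0] with ν hν using mul_ne_zero (by positivity) hν
  rw [← (volume_preserving_prodAssoc (α₁ := Fin n → ℝ) (β₁ := Fin n → ℝ) (γ₁ := ℝ)).integral_comp
    MeasurableEquiv.prodAssoc.measurableEmbedding]
  simp_rw [ktC_mul_embH_eq_fourier, ktC_inv_embH_mul_eq_fourierInv]
  calc _ = ∫ ν : ℝ, ∫ y, heatSymbol n s (HCmul g (horizontal y)) (2 * Real.pi * ν) *
          heatSymbol n t (HCmul (HCinv (horizontal y)) g') (2 * Real.pi * ν) :=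
        integral_partialFourier_mul_partialFourierInv
          (hleft.memLp_two hleft_meas) (hleft.ae_integrable_right hleft_meas)
          (hright.memLp_two hright_meas) (hright.ae_integrable_right hright_meas)
    _ = ∫ ν : ℝ, heatSymbol n (s + t) (HCmul g g') (2 * Real.pi * ν) := by
        refine integral_congr_ae ?_
        filter_upwards [hae] with ν hν using integral_heatSymbol_mul_heatSymbol hs ht hν g g'
    _ = ktC n (s + t) (HCmul g g') := (ktC_eq_integral_heatSymbol _ _).symm

/-- For all `z, w ∈ ℍ_ℂ`,
`∫_ℍ k_t^∼(conj(w)⁻¹ h) k_t^∼(h⁻¹ z) dh = k_{2t}^∼(conj(w)⁻¹ z)`; hence the reproducing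
kernel of the image of the heat kernel transform `ℋ_t` is `𝒦^t(z,w) = k_{2t}^∼(conj(w)⁻¹ z)`. -/
theorem reproducing_kernel_identity
    (n : ℕ) (hn : 1 ≤ n) (t : ℝ) (ht : 0 < t) (z w : HCpt n) :
    ∫ h : Hpt n,
        ktC n t (HCmul (HCinv (conjHC w)) (embH h)) * ktC n t (HCmul (HCinv (embH h)) z)
      = ktC n (2 * t) (HCmul (HCinv (conjHC w)) z) := by
  rw [two_mul]
  exact reproducing_kernel_identity_general ht ht _ z
end
end
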